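/- arXiv:2409.16026 — 5 statements merged into one kernel-verified Lean document; each statement's English description precedes it below -/
import Mathlib

section
/- For every real number z with |z| < 1, one has Σ_{n=1}^∞ (2z)^{2n} / (C(2n,n) · n) = 2z·arcsin(z) / √(1-z²), where C(2n,n) is the central binomial coefficient. -/
/-!
With `a n = 4 ^ n / ((2 * n + 1) * C(2n, n))`, the `n`-th term of Lehmer's series is
`2 * z * (a n * z ^ (2 * n + 1))`, so the claim is that `f z = ∑ a n * z ^ (2 * n + 1)` equals
`arcsin z / √(1 - z ^ 2)`. The recurrence `(2 * n + 3) * a (n + 1) = 2 * (n + 1) * a n` is, read off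
coefficientwise, the differential equation `(1 - z ^ 2) * f' z = 1 + z * f z`, and this equation
says exactly that `√(1 - z ^ 2) * f z` has the derivative `1 / √(1 - z ^ 2)` of `arcsin`.
-/

open Metric Set

section OddPowerSeries

variable {𝕜 : Type*} {a : ℕ → 𝕜} {C : ℝ} {z : 𝕜}

lemma summable_two_mul_add_one_mul_pow [NormedField 𝕜] [CompleteSpace 𝕜] (hz : ‖z‖ < 1) :
    Summable fun n : ℕ => (2 * n + 1) * z ^ (2 * n) := by
  have hz2 : ‖z ^ 2‖ < 1 := by
    rw [norm_pow]
    exact pow_lt_one₀ (norm_nonneg z) hz two_ne_zero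
  have hlinear := (summable_pow_mul_geometric_of_norm_lt_one 1 hz2).mul_left 2
  refine (hlinear.add (summable_geometric_of_norm_lt_one hz2)).congr fun n => ?_
  rw [pow_mul]
  ring

lemma norm_two_mul_add_one_mul_pow_le [NormedField 𝕜] (ha : ∀ n, ‖a n‖ ≤ C) {r : ℝ}
    (hz : ‖z‖ ≤ r) (n : ℕ) :
    ‖(2 * n + 1) * a n * z ^ (2 * n)‖ ≤ C * ((2 * n + 1) * r ^ (2 * n)) := by
  have hodd : ‖(2 * n + 1 : 𝕜)‖ ≤ 2 * n + 1 := by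
    simpa using Nat.norm_cast_le (α := 𝕜) (2 * n + 1)
  have hC : 0 ≤ C := (norm_nonneg (a n)).trans (ha n)
  calc ‖(2 * n + 1) * a n * z ^ (2 * n)‖
      = ‖(2 * n + 1 : 𝕜)‖ * ‖a n‖ * ‖z‖ ^ (2 * n) := by rw [norm_mul, norm_mul, norm_pow]
    _ ≤ (2 * n + 1) * C * r ^ (2 * n) := by
      gcongr
      exact ha n
    _ = C * ((2 * n + 1) * r ^ (2 * n)) := by ring

lemma summable_two_mul_add_one_mul_mul_pow [NormedField 𝕜] [CompleteSpace 𝕜]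
    (ha : ∀ n, ‖a n‖ ≤ C) (hz : ‖z‖ < 1) :
    Summable fun n : ℕ => (2 * n + 1) * a n * z ^ (2 * n) :=
  .of_norm_bounded ((summable_two_mul_add_one_mul_pow (by rwa [norm_norm])).mul_left C)
    (norm_two_mul_add_one_mul_pow_le ha le_rfl)

lemma summable_mul_pow_two_mul_add_one [NormedField 𝕜] [CompleteSpace 𝕜]
    (ha : ∀ n, ‖a n‖ ≤ C) (hz : ‖z‖ < 1) :
    Summable fun n : ℕ => a n * z ^ (2 * n + 1) := by
  have hgeom : Summable fun n : ℕ => ‖z‖ ^ (2 * n + 1) :=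
    (summable_geometric_of_lt_one (norm_nonneg z) hz).comp_injective fun m n h => by
      simpa using h
  refine .of_norm_bounded (hgeom.mul_left C) fun n => ?_
  rw [norm_mul, norm_pow]
  gcongr
  exact ha n

lemma hasDerivAt_tsum_mul_pow_two_mul_add_one [RCLike 𝕜] (ha : ∀ n, ‖a n‖ ≤ C) (hz : ‖z‖ < 1) :
    HasDerivAt (fun w => ∑' n : ℕ, a n * w ^ (2 * n + 1))
      (∑' n : ℕ, (2 * n + 1) * a n * z ^ (2 * n)) z := by
  obtain ⟨r, hzr, hr⟩ := exists_between hz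
  have hr0 : 0 < r := (norm_nonneg z).trans_lt hzr
  have hterm (n : ℕ) (w : 𝕜) :
      HasDerivAt (fun w => a n * w ^ (2 * n + 1)) ((2 * n + 1) * a n * w ^ (2 * n)) w := by
    refine ((hasDerivAt_pow (2 * n + 1) w).const_mul (a n)).congr_deriv ?_
    push_cast
    ring
  exact hasDerivAt_tsum_of_isPreconnected
    ((summable_two_mul_add_one_mul_pow (by rwa [Real.norm_of_nonneg hr0.le])).mul_left C)
    isOpen_ball (isPreconnected_ball (x := (0 : 𝕜)) (r := r)) (fun n w _ => hterm n w)
    (fun n w hw => norm_two_mul_add_one_mul_pow_le ha (mem_ball_zero_iff.mp hw).le n)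
    (mem_ball_self hr0) (by simp [summable_zero]) (mem_ball_zero_iff.mpr hzr)

end OddPowerSeries

section Coefficients

variable (K : Type*)

/-- The coefficient `4 ^ n / ((2 * n + 1) * C(2n, n))` of `z ^ (2 * n + 1)` in the expansion of
`arcsin z / √(1 - z ^ 2)` at `0`, as an element of `K`. -/
def arcsinDivSqrtCoeff [DivisionRing K] (n : ℕ) : K := 4 ^ n / ((2 * n + 1) * n.centralBinom)

lemma arcsinDivSqrtCoeff_zero [DivisionRing K] : arcsinDivSqrtCoeff K 0 = 1 := by
  simp [arcsinDivSqrtCoeff]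

lemma arcsinDivSqrtCoeff_succ [Field K] [CharZero K] (n : ℕ) :
    (2 * n + 3) * arcsinDivSqrtCoeff K (n + 1) = 2 * (n + 1) * arcsinDivSqrtCoeff K n := by
  have hbinom : ((n : K) + 1) * (n + 1).centralBinom = 2 * (2 * n + 1) * n.centralBinom := by
    exact_mod_cast n.succ_mul_centralBinom_succ
  have h1 : (2 * n + 1 : K) ≠ 0 := by exact_mod_cast (2 * n).succ_ne_zero
  have h3 : (2 * (n + 1) + 1 : K) ≠ 0 := by exact_mod_cast (2 * (n + 1)).succ_ne_zero
  have hn : (n.centralBinom : K) ≠ 0 := mod_cast n.centralBinom_ne_zero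
  have hn1 : ((n + 1).centralBinom : K) ≠ 0 := mod_cast (n + 1).centralBinom_ne_zero
  simp only [arcsinDivSqrtCoeff, Nat.cast_add, Nat.cast_one]
  field_simp
  linear_combination (-2 * (2 * n + 3) * 4 ^ n : K) * hbinom

lemma norm_arcsinDivSqrtCoeff_le_one [RCLike K] (n : ℕ) : ‖arcsinDivSqrtCoeff K n‖ ≤ 1 := by
  have hpos : (0 : ℝ) < (2 * n + 1) * n.centralBinom :=
    mul_pos (by positivity) (mod_cast n.centralBinom_pos)
  have hnorm : ‖arcsinDivSqrtCoeff K n‖ = 4 ^ n / ((2 * n + 1) * n.centralBinom) := by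
    have hodd : ‖(2 * n + 1 : K)‖ = 2 * n + 1 := mod_cast RCLike.norm_natCast (K := K) (2 * n + 1)
    simp [arcsinDivSqrtCoeff, hodd]
  rw [hnorm, div_le_one hpos]
  exact_mod_cast n.four_pow_le_two_mul_add_one_mul_central_binom

lemma two_mul_pow_div_centralBinom_succ [Field K] [CharZero K] (z : K) (n : ℕ) :
    (2 * z) ^ (2 * (n + 1)) / ((n + 1).centralBinom * (n + 1)) =
      2 * z * (arcsinDivSqrtCoeff K n * z ^ (2 * n + 1)) := by
  have hbinom : ((n + 1).centralBinom : K) * (n + 1) = 2 * ((2 * n + 1) * n.centralBinom) := by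
    rw [mul_comm, ← mul_assoc]
    exact_mod_cast n.succ_mul_centralBinom_succ
  have hpow : (2 * z) ^ (2 * (n + 1)) = 2 * (4 ^ n * (2 * z * z ^ (2 * n + 1))) := by
    have hfour : (4 : K) ^ n = 2 ^ (2 * n) := by rw [pow_mul]; norm_num
    rw [hfour]
    ring
  rw [hbinom, hpow, mul_div_mul_left _ _ two_ne_zero, arcsinDivSqrtCoeff]
  ring

end Coefficients

section DifferentialEquation

lemma one_sub_sq_mul_tsum_arcsinDivSqrtCoeff {𝕜 : Type*} [RCLike 𝕜] {z : 𝕜} (hz : ‖z‖ < 1) :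
    (1 - z ^ 2) * ∑' n : ℕ, (2 * n + 1) * arcsinDivSqrtCoeff 𝕜 n * z ^ (2 * n) =
      1 + z * ∑' n : ℕ, arcsinDivSqrtCoeff 𝕜 n * z ^ (2 * n + 1) := by
  set a := arcsinDivSqrtCoeff 𝕜
  set b : ℕ → 𝕜 := fun n => (2 * n + 1) * a n * z ^ (2 * n)
  have hb : Summable b :=
    summable_two_mul_add_one_mul_mul_pow (norm_arcsinDivSqrtCoeff_le_one 𝕜) hz
  have hsplit : ∑' n, b n = 1 + ∑' n, b (n + 1) := by
    simpa [b, a, arcsinDivSqrtCoeff_zero] using hb.tsum_eq_zero_add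
  have hcoeff (n : ℕ) : b (n + 1) - z ^ 2 * b n = z * (a n * z ^ (2 * n + 1)) := by
    simp only [b, Nat.cast_add, Nat.cast_one]
    linear_combination z ^ (2 * n + 2) * arcsinDivSqrtCoeff_succ 𝕜 n
  calc (1 - z ^ 2) * ∑' n, b n
      = 1 + (∑' n, b (n + 1) - z ^ 2 * ∑' n, b n) := by linear_combination hsplit
    _ = 1 + ∑' n, (b (n + 1) - z ^ 2 * b n) := by
      rw [((summable_nat_add_iff 1).mpr hb).tsum_sub (hb.mul_left _), tsum_mul_left]
    _ = 1 + z * ∑' n, a n * z ^ (2 * n + 1) := by simp only [hcoeff, tsum_mul_left]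

variable {f f' : ℝ → ℝ} {x y : ℝ}

lemma hasDerivAt_sqrt_one_sub_sq_mul (hx : |x| < 1) (hf : HasDerivAt f y x)
    (hode : (1 - x ^ 2) * y = 1 + x * f x) :
    HasDerivAt (fun t => √(1 - t ^ 2) * f t) (1 / √(1 - x ^ 2)) x := by
  have hpos : 0 < 1 - x ^ 2 := sub_pos.mpr ((sq_lt_one_iff_abs_lt_one x).mpr hx)
  have hsqrt : HasDerivAt (fun t : ℝ => √(1 - t ^ 2)) (-(2 * x) / (2 * √(1 - x ^ 2))) x := by
    simpa using ((hasDerivAt_pow 2 x).const_sub 1).sqrt hpos.ne'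
  refine (hsqrt.mul hf).congr_deriv ?_
  have hne : √(1 - x ^ 2) ≠ 0 := (Real.sqrt_pos.mpr hpos).ne'
  field_simp
  rw [Real.sq_sqrt hpos.le]
  linear_combination hode

lemma eq_arcsin_div_sqrt_of_hasDerivAt (hf : ∀ t, |t| < 1 → HasDerivAt f (f' t) t)
    (hode : ∀ t, |t| < 1 → (1 - t ^ 2) * f' t = 1 + t * f t) (hf0 : f 0 = 0) (hx : |x| < 1) :
    f x = Real.arcsin x / √(1 - x ^ 2) := by
  have hprod (t : ℝ) (ht : t ∈ Ioo (-1) 1) :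
      HasDerivAt (fun t => √(1 - t ^ 2) * f t) (1 / √(1 - t ^ 2)) t :=
    have ht' := abs_lt.mpr ht
    hasDerivAt_sqrt_one_sub_sq_mul ht' (hf t ht') (hode t ht')
  have harcsin (t : ℝ) (ht : t ∈ Ioo (-1) 1) : HasDerivAt Real.arcsin (1 / √(1 - t ^ 2)) t :=
    Real.hasDerivAt_arcsin ht.1.ne' ht.2.ne
  have heq : √(1 - x ^ 2) * f x = Real.arcsin x :=
    isOpen_Ioo.eqOn_of_deriv_eq isPreconnected_Ioo
      (fun t ht => (hprod t ht).differentiableAt.differentiableWithinAt)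
      (fun t ht => (harcsin t ht).differentiableAt.differentiableWithinAt)
      (fun t ht => (hprod t ht).deriv.trans (harcsin t ht).deriv.symm)
      (show (0 : ℝ) ∈ Ioo (-1) 1 by norm_num) (by simp [hf0]) (abs_lt.mp hx)
  have hpos : 0 < 1 - x ^ 2 := sub_pos.mpr ((sq_lt_one_iff_abs_lt_one x).mpr hx)
  rw [eq_div_iff (Real.sqrt_pos.mpr hpos).ne', mul_comm, heq]

end DifferentialEquation

theorem hasSum_arcsin_div_sqrt {x : ℝ} (hx : |x| < 1) :
    HasSum (fun n : ℕ => arcsinDivSqrtCoeff ℝ n * x ^ (2 * n + 1))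
      (Real.arcsin x / √(1 - x ^ 2)) := by
  have hbound := norm_arcsinDivSqrtCoeff_le_one ℝ
  rw [← eq_arcsin_div_sqrt_of_hasDerivAt
    (fun t ht => hasDerivAt_tsum_mul_pow_two_mul_add_one hbound ht)
    (fun t ht => one_sub_sq_mul_tsum_arcsinDivSqrtCoeff ht) (by simp) hx]
  exact (summable_mul_pow_two_mul_add_one hbound hx).hasSum

/-- **Lehmer's arcsine series.**
For every real `z` with `|z| < 1`,
`∑_{n=1}^∞ (2z)^{2n} / (C(2n,n) n) = 2 z arcsin z / √(1-z²)`. -/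
theorem lehmer_arcsin_series (z : ℝ) (hz : |z| < 1) :
    ∑' n : ℕ, (2 * z) ^ (2 * (n + 1)) / ((Nat.centralBinom (n + 1) : ℝ) * ((n : ℝ) + 1)) =
      2 * z * Real.arcsin z / Real.sqrt (1 - z ^ 2) := by
  simp only [two_mul_pow_div_centralBinom_succ]
  rw [((hasSum_arcsin_div_sqrt hz).mul_left (2 * z)).tsum_eq, mul_div_assoc]
end

section
/- For every integer k ≥ 0, Σ_{n=1}^∞ n^{k-1} / C(2n,n) = (2/3)^k · ( (1/2)·p_{k-1}(1/4) + (π/(3√3))·q_{k-1}(1/4) ). In particular this value lies in ℚ + ℚ·(π/√3). -/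
open Polynomial

/-- Lehmer's polynomials `q_k(x)` for `k ≥ -1`, shifted so that `lehmerQ n = q_{n-1}`:
`q_{-1}(x) = 1` and `q_{k+1}(x) = (2(k+1)x+1) q_k(x) + 2x(1-x) q_k'(x)`. -/
noncomputable def lehmerQ : ℕ → Polynomial ℝ
  | 0 => 1
  | n + 1 => (C (2 * (n : ℝ)) * X + 1) * lehmerQ n + (2 * X * (1 - X)) * derivative (lehmerQ n)

/-- Lehmer's polynomials `p_k(x)` for `k ≥ -1`, shifted so that `lehmerP n = p_{n-1}`:
`p_{-1}(x) = 0` and `p_{k+1}(x) = 2(kx+1) p_k(x) + 2x(1-x) p_k'(x) + q_k(x)`. -/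
noncomputable def lehmerP : ℕ → Polynomial ℝ
  | 0 => 0
  | n + 1 => C 2 * (C ((n : ℝ) - 1) * X + 1) * lehmerP n
      + (2 * X * (1 - X)) * derivative (lehmerP n) + lehmerQ n

/-!
Write `cₙ = 4 ^ (n + 1) / ((n + 1) C(2n + 2, n + 1))` and `Sₖ(y) = ∑ (n + 1) ^ k cₙ y ^ n`, so that
the sum to be evaluated is `Sₖ(1 / 4) / 4`. Termwise differentiation gives `(y Sₖ)' = Sₖ₊₁`, and the
recursion of the central binomial coefficients gives `2 (1 - y) S₁ = 2 + S₀`. Multiplying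
`(2 (1 - y)) ^ k Sₖ = 2 pₖ₋₁ + qₖ₋₁ S₀` by `y`, differentiating and eliminating `S₁` reproduces
exactly the recursions that define `pₖ` and `qₖ`. The same differential equation says that
`√(1 - x²) x S₀(x²)` and `2 arcsin x` have equal derivatives, which determines `S₀`.
-/

open Asymptotics Filter Topology

section PowerSeries

theorem summable_norm_mul_natCast_mul_pow_sub_one {𝕜 : Type*} [NormedField 𝕜] {u : ℕ → 𝕜} {k : ℕ}
    {z : 𝕜} (hu : u =O[atTop] fun n ↦ ((n ^ k : ℕ) : 𝕜)) (hz : ‖z‖ < 1) :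
    Summable fun n : ℕ ↦ ‖u n * (n * z ^ (n - 1))‖ := by
  rcases eq_or_ne z 0 with rfl | hz0
  · refine summable_of_ne_finset_zero (s := {1}) fun n hn ↦ ?_
    rcases n with _ | _ | n <;> simp_all
  · have hnu : (fun n ↦ n * u n) =O[atTop] fun n ↦ ((n ^ (k + 1) : ℕ) : 𝕜) := by
      simpa only [pow_succ', Nat.cast_mul] using (isBigO_refl (fun n : ℕ ↦ (n : 𝕜)) atTop).mul hu
    refine ((summable_norm_mul_geometric_of_norm_lt_one' hz hnu).mul_left ‖z‖⁻¹).congr fun n ↦ ?_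
    rw [← norm_inv, ← norm_mul]
    rcases n with _ | n
    · simp
    · rw [Nat.add_sub_cancel, pow_succ]
      congr 1
      field_simp

variable {𝕜 : Type*} [RCLike 𝕜] {u : ℕ → 𝕜} {k : ℕ} {z : 𝕜}

theorem hasDerivAt_tsum_mul_pow (hu : u =O[atTop] fun n ↦ ((n ^ k : ℕ) : 𝕜)) (hz : ‖z‖ < 1) :
    HasDerivAt (fun w ↦ ∑' n, u n * w ^ n) (∑' n, u n * (n * z ^ (n - 1))) z := by
  obtain ⟨r, hzr, hr⟩ := exists_between hz
  have hr0 : 0 ≤ r := (norm_nonneg z).trans hzr.le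
  have hr_norm : ‖(r : 𝕜)‖ = r := RCLike.norm_of_nonneg hr0
  have hbound (n : ℕ) (w : 𝕜) (hw : w ∈ Metric.ball (0 : 𝕜) r) :
      ‖u n * (n * w ^ (n - 1))‖ ≤ ‖u n * (n * (r : 𝕜) ^ (n - 1))‖ := by
    simp only [norm_mul, norm_pow, hr_norm]
    gcongr
    exact (mem_ball_zero_iff.1 hw).le
  have hz_mem : z ∈ Metric.ball (0 : 𝕜) r := mem_ball_zero_iff.2 hzr
  exact hasDerivAt_tsum_of_isPreconnected
    (summable_norm_mul_natCast_mul_pow_sub_one hu (hr_norm.trans_lt hr)) Metric.isOpen_ball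
    Metric.isPreconnected_ball (fun n w _ ↦ (hasDerivAt_pow n w).const_mul (u n)) hbound
    hz_mem (summable_norm_mul_geometric_of_norm_lt_one' hz hu).of_norm hz_mem

theorem hasDerivAt_mul_tsum_mul_pow (hu : u =O[atTop] fun n ↦ ((n ^ k : ℕ) : 𝕜)) (hz : ‖z‖ < 1) :
    HasDerivAt (fun w ↦ w * ∑' n, u n * w ^ n) (∑' n : ℕ, (n + 1) * u n * z ^ n) z := by
  refine ((hasDerivAt_id' z).fun_mul (hasDerivAt_tsum_mul_pow hu hz)).congr_deriv ?_
  rw [one_mul, ← tsum_mul_left,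
    ← (summable_norm_mul_geometric_of_norm_lt_one' hz hu).of_norm.tsum_add
      ((summable_norm_mul_natCast_mul_pow_sub_one hu hz).of_norm.mul_left z)]
  refine tsum_congr fun n ↦ ?_
  rcases n with _ | n
  · simp
  · rw [Nat.add_sub_cancel, pow_succ]
    ring

end PowerSeries

section Coefficients

/-- The coefficient of `y ^ n` in `y⁻¹ ∑_{m ≥ 1} (4 y) ^ m / (m C(2m, m))`. Dividing by `y` shifts
the index to start at zero, so the coefficient with a vanishing denominator never occurs. -/
noncomputable def lehmerCoeff (n : ℕ) : ℝ :=
  4 ^ (n + 1) / ((n + 1) * Nat.centralBinom (n + 1))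

theorem lehmerCoeff_nonneg (n : ℕ) : 0 ≤ lehmerCoeff n := by
  unfold lehmerCoeff
  positivity

theorem lehmerCoeff_le_two (n : ℕ) : lehmerCoeff n ≤ 2 := by
  have hpos : (0 : ℝ) < Nat.centralBinom (n + 1) := mod_cast Nat.centralBinom_pos (n + 1)
  rw [lehmerCoeff, div_le_iff₀ (by positivity), ← mul_assoc]
  exact_mod_cast Nat.four_pow_le_two_mul_self_mul_centralBinom (n + 1) n.succ_pos

theorem lehmerCoeff_zero : lehmerCoeff 0 = 2 := by
  norm_num [lehmerCoeff, Nat.centralBinom_eq_two_mul_choose]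

theorem lehmerCoeff_succ (n : ℕ) :
    (2 * n + 3) * lehmerCoeff (n + 1) = 2 * (n + 1) * lehmerCoeff n := by
  have hn : (Nat.centralBinom (n + 1) : ℝ) ≠ 0 := mod_cast (n + 1).centralBinom_ne_zero
  have hn' : (Nat.centralBinom (n + 1 + 1) : ℝ) ≠ 0 := mod_cast (n + 1 + 1).centralBinom_ne_zero
  have hrec : ((n : ℝ) + 1 + 1) * Nat.centralBinom (n + 1 + 1) =
      2 * (2 * (n + 1) + 1) * Nat.centralBinom (n + 1) :=
    mod_cast Nat.succ_mul_centralBinom_succ (n + 1)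
  simp only [lehmerCoeff, Nat.cast_add, Nat.cast_one]
  field_simp
  linear_combination (-2 * 4 ^ (n + 1)) * hrec

theorem isBigO_add_one_pow_mul_lehmerCoeff (k : ℕ) :
    (fun n : ℕ ↦ ((n : ℝ) + 1) ^ k * lehmerCoeff n) =O[atTop] fun n ↦ ((n ^ k : ℕ) : ℝ) := by
  refine IsBigO.of_bound (2 ^ k * 2) ?_
  filter_upwards [eventually_ge_atTop 1] with n hn
  have hn' : (1 : ℝ) ≤ n := mod_cast hn
  have hc := lehmerCoeff_nonneg n
  rw [Real.norm_of_nonneg (by positivity), Real.norm_of_nonneg (by positivity), Nat.cast_pow]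
  calc ((n : ℝ) + 1) ^ k * lehmerCoeff n
      ≤ (2 * n) ^ k * 2 := by
        gcongr
        · linarith
        · exact lehmerCoeff_le_two n
    _ = 2 ^ k * 2 * n ^ k := by ring

end Coefficients

section Series

/-- The function `y⁻¹ ∑_{m ≥ 1} m ^ (k - 1) (4 y) ^ m / C(2m, m)`, with its removable singularity at
`y = 0` filled in. Where the series diverges, `tsum` gives the junk value `0`. -/
noncomputable def lehmerSeries (k : ℕ) (y : ℝ) : ℝ :=
  ∑' n : ℕ, ((n : ℝ) + 1) ^ k * lehmerCoeff n * y ^ n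

variable {y : ℝ}

theorem hasSum_lehmerSeries (k : ℕ) (hy : |y| < 1) :
    HasSum (fun n : ℕ ↦ ((n : ℝ) + 1) ^ k * lehmerCoeff n * y ^ n) (lehmerSeries k y) :=
  (summable_norm_mul_geometric_of_norm_lt_one' hy
    (isBigO_add_one_pow_mul_lehmerCoeff k)).of_norm.hasSum

theorem differentiableAt_lehmerSeries (k : ℕ) (hy : |y| < 1) :
    DifferentiableAt ℝ (lehmerSeries k) y :=
  (hasDerivAt_tsum_mul_pow (isBigO_add_one_pow_mul_lehmerCoeff k) hy).differentiableAt

theorem hasDerivAt_mul_lehmerSeries (k : ℕ) (hy : |y| < 1) :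
    HasDerivAt (fun z ↦ z * lehmerSeries k z) (lehmerSeries (k + 1) y) y := by
  simpa only [lehmerSeries, pow_succ', mul_assoc] using
    hasDerivAt_mul_tsum_mul_pow (isBigO_add_one_pow_mul_lehmerCoeff k) hy

theorem lehmerSeries_succ (k : ℕ) (hy : |y| < 1) :
    lehmerSeries (k + 1) y = lehmerSeries k y + y * deriv (lehmerSeries k) y := by
  simpa only [one_mul] using (hasDerivAt_mul_lehmerSeries k hy).unique
    ((hasDerivAt_id' y).fun_mul (differentiableAt_lehmerSeries k hy).hasDerivAt)

theorem two_mul_one_sub_mul_lehmerSeries_one (hy : |y| < 1) :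
    2 * (1 - y) * lehmerSeries 1 y = 2 + lehmerSeries 0 y := by
  have h0 := hasSum_lehmerSeries 0 hy
  have h1 := (hasSum_lehmerSeries 1 hy).mul_left 2
  have hdiff : 2 * lehmerSeries 1 y - lehmerSeries 0 y = 2 + y * (2 * lehmerSeries 1 y) := by
    refine (h1.sub h0).unique ((hasSum_nat_add_iff' 1).1 ?_)
    convert! h1.mul_left y using 1
    · funext n
      push_cast
      linear_combination y ^ (n + 1) * lehmerCoeff_succ n
    · rw [Finset.sum_range_one, lehmerCoeff_zero]
      ring
  linear_combination hdiff

theorem lehmerSeries_eq_lehmerP_add_lehmerQ_mul (k : ℕ) (hy : |y| < 1) :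
    (2 * (1 - y)) ^ k * lehmerSeries k y =
      2 * (lehmerP k).eval y + (lehmerQ k).eval y * lehmerSeries 0 y := by
  induction k generalizing y with
  | zero => simp [lehmerP, lehmerQ]
  | succ k ih =>
    have hfactor : HasDerivAt (fun z : ℝ ↦ (2 * (1 - z)) ^ k)
        (k * (2 * (1 - y)) ^ (k - 1) * (-2)) y := by
      simpa using (((hasDerivAt_id y).const_sub 1).const_mul 2).fun_pow k
    have hleft := hfactor.fun_mul (hasDerivAt_mul_lehmerSeries k hy)
    have hright := (((hasDerivAt_id' y).const_mul 2).fun_mul ((lehmerP k).hasDerivAt y)).fun_add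
      (((lehmerQ k).hasDerivAt y).fun_mul (hasDerivAt_mul_lehmerSeries 0 hy))
    have heq : (fun z ↦ (2 * (1 - z)) ^ k * (z * lehmerSeries k z)) =ᶠ[𝓝 y]
        fun z ↦ 2 * z * (lehmerP k).eval z + (lehmerQ k).eval z * (z * lehmerSeries 0 z) := by
      filter_upwards [(isOpen_lt continuous_abs continuous_const).mem_nhds hy] with z hz
      linear_combination z * ih hz
    have hderiv := hleft.unique (hright.congr_of_eventuallyEq heq)
    have hpow : 2 * (1 - y) * (k * (2 * (1 - y)) ^ (k - 1)) = k * (2 * (1 - y)) ^ k := by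
      rcases k with _ | k
      · simp
      · rw [Nat.add_sub_cancel, pow_succ]
        ring
    simp only [lehmerP, lehmerQ, eval_add, eval_mul, eval_sub, eval_C, eval_X, eval_one,
      eval_ofNat]
    linear_combination 2 * (1 - y) * hderiv + 2 * k * y * ih hy +
      2 * y * lehmerSeries k y * hpow +
      (lehmerQ k).eval y * two_mul_one_sub_mul_lehmerSeries_one hy

end Series

section Arcsin

variable {x : ℝ}

theorem hasDerivAt_sqrt_mul_lehmerSeries_zero_sq (hx : |x| < 1) :
    HasDerivAt (fun t ↦ √(1 - t ^ 2) * (t * lehmerSeries 0 (t ^ 2)))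
      (2 * (1 / √(1 - x ^ 2))) x := by
  have hpos : 0 < 1 - x ^ 2 := sub_pos.2 ((sq_lt_one_iff_abs_lt_one x).2 hx)
  have hy : |x ^ 2| < 1 := by rw [abs_of_nonneg (sq_nonneg x)]; linarith
  have hsq : HasDerivAt (fun t : ℝ ↦ t ^ 2) (2 * x) x := by simpa using hasDerivAt_pow 2 x
  have hseries : HasDerivAt (fun t ↦ lehmerSeries 0 (t ^ 2))
      (deriv (lehmerSeries 0) (x ^ 2) * (2 * x)) x :=
    (differentiableAt_lehmerSeries 0 hy).hasDerivAt.comp (h := fun t : ℝ ↦ t ^ 2) x hsq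
  refine (((hsq.const_sub 1).sqrt hpos.ne').fun_mul
    ((hasDerivAt_id' x).fun_mul hseries)).congr_deriv ?_
  have hode := two_mul_one_sub_mul_lehmerSeries_one hy
  have hone : lehmerSeries 1 (x ^ 2) = lehmerSeries 0 (x ^ 2) +
      x ^ 2 * deriv (lehmerSeries 0) (x ^ 2) := lehmerSeries_succ 0 hy
  rw [hone] at hode
  have hroot : √(1 - x ^ 2) ≠ 0 := (Real.sqrt_pos.2 hpos).ne'
  field_simp
  rw [Real.sq_sqrt hpos.le]
  linear_combination hode

theorem sqrt_mul_lehmerSeries_zero_sq (hx : |x| < 1) :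
    √(1 - x ^ 2) * (x * lehmerSeries 0 (x ^ 2)) = 2 * Real.arcsin x := by
  have hleft (t : ℝ) (ht : t ∈ Metric.ball (0 : ℝ) 1) :=
    hasDerivAt_sqrt_mul_lehmerSeries_zero_sq (mem_ball_zero_iff.1 ht)
  have hright (t : ℝ) (ht : t ∈ Metric.ball (0 : ℝ) 1) :
      HasDerivAt (fun t ↦ 2 * Real.arcsin t) (2 * (1 / √(1 - t ^ 2))) t := by
    have habs := abs_lt.1 (mem_ball_zero_iff.1 ht)
    exact (Real.hasDerivAt_arcsin habs.1.ne' habs.2.ne).const_mul 2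
  exact Metric.isOpen_ball.eqOn_of_deriv_eq Metric.isPreconnected_ball
    (fun t ht ↦ (hleft t ht).differentiableAt.differentiableWithinAt)
    (fun t ht ↦ (hright t ht).differentiableAt.differentiableWithinAt)
    (fun t ht ↦ (hleft t ht).deriv.trans (hright t ht).deriv.symm)
    (Metric.mem_ball_self one_pos) (by simp) (mem_ball_zero_iff.2 hx)

theorem hasSum_zpow_mul_pow_div_centralBinom (k : ℕ) (hx : |x| < 1) :
    HasSum (fun n : ℕ ↦
        ((n : ℝ) + 1) ^ ((k : ℤ) - 1) * (2 * x) ^ (2 * (n + 1)) / Nat.centralBinom (n + 1))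
      ((2 * (1 - x ^ 2))⁻¹ ^ k * (2 * x ^ 2 * (lehmerP k).eval (x ^ 2) +
        2 * x * Real.arcsin x / √(1 - x ^ 2) * (lehmerQ k).eval (x ^ 2))) := by
  have hpos : 0 < 1 - x ^ 2 := sub_pos.2 ((sq_lt_one_iff_abs_lt_one x).2 hx)
  have hy : |x ^ 2| < 1 := by rw [abs_of_nonneg (sq_nonneg x)]; linarith
  have hroot : √(1 - x ^ 2) ≠ 0 := (Real.sqrt_pos.2 hpos).ne'
  convert! (hasSum_lehmerSeries k hy).mul_left (x ^ 2) using 1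
  · funext n
    have hn : (n : ℝ) + 1 ≠ 0 := n.cast_add_one_ne_zero
    rw [lehmerCoeff, zpow_sub_one₀ hn, zpow_natCast, pow_mul, mul_pow,
      show (2 : ℝ) ^ 2 = 4 by norm_num, mul_pow, pow_succ (x ^ 2)]
    field_simp
  · have harcsin : 2 * x * Real.arcsin x / √(1 - x ^ 2) = x ^ 2 * lehmerSeries 0 (x ^ 2) := by
      rw [div_eq_iff hroot]
      linear_combination -x * sqrt_mul_lehmerSeries_zero_sq hx
    rw [harcsin, inv_pow, inv_mul_eq_iff_eq_mul₀ (by positivity)]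
    linear_combination -x ^ 2 * lehmerSeries_eq_lehmerP_add_lehmerQ_mul k hy

end Arcsin

theorem arcsin_one_half : Real.arcsin (1 / 2) = Real.pi / 6 :=
  Real.arcsin_eq_of_sin_eq Real.sin_pi_div_six (by constructor <;> linarith [Real.pi_pos])

theorem hasSum_zpow_div_centralBinom (k : ℕ) :
    HasSum (fun n : ℕ ↦ ((n : ℝ) + 1) ^ ((k : ℤ) - 1) / Nat.centralBinom (n + 1))
      ((2 / 3) ^ k * (1 / 2 * (lehmerP k).eval (1 / 4) +
        Real.pi / (3 * √3) * (lehmerQ k).eval (1 / 4))) := by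
  have hroot : √(1 - (1 / 2) ^ 2) = √3 / 2 := by
    rw [show (1 : ℝ) - (1 / 2) ^ 2 = 3 / 2 ^ 2 by norm_num, Real.sqrt_div zero_le_three,
      Real.sqrt_sq zero_le_two]
  have hweight : 2 * (1 / 2) * Real.arcsin (1 / 2) / √(1 - (1 / 2) ^ 2) = Real.pi / (3 * √3) := by
    rw [hroot, arcsin_one_half]
    field_simp
    norm_num
  have hlehmer := hasSum_zpow_mul_pow_div_centralBinom (x := 1 / 2) k
    (by rw [abs_of_pos] <;> norm_num)
  rw [hweight] at hlehmer
  convert! hlehmer using 1 <;> norm_num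

section Rationality

theorem lehmerQ_mem_lifts (k : ℕ) : lehmerQ k ∈ lifts (algebraMap ℤ ℝ) := by
  induction k with
  | zero => exact one_mem _
  | succ k ih =>
    obtain ⟨q, hq⟩ := (mem_lifts _).1 ih
    refine (mem_lifts _).2 ⟨(C (2 * (k : ℤ)) * X + 1) * q + 2 * X * (1 - X) * derivative q, ?_⟩
    simp [lehmerQ, ← hq, derivative_map, C_ofNat]

theorem lehmerP_mem_lifts (k : ℕ) : lehmerP k ∈ lifts (algebraMap ℤ ℝ) := by
  induction k with
  | zero => exact zero_mem _
  | succ k ih =>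
    obtain ⟨p, hp⟩ := (mem_lifts _).1 ih
    obtain ⟨q, hq⟩ := (mem_lifts _).1 (lehmerQ_mem_lifts k)
    refine (mem_lifts _).2
      ⟨C 2 * (C ((k : ℤ) - 1) * X + 1) * p + 2 * X * (1 - X) * derivative p + q, ?_⟩
    simp [lehmerP, ← hp, ← hq, derivative_map, C_ofNat]

theorem eval_algebraMap_mem_range_of_mem_lifts {R A B : Type*} [CommSemiring R] [CommSemiring A]
    [Semiring B] [Algebra R A] [Algebra R B] [Algebra A B] [IsScalarTower R A B] {p : B[X]}
    (hp : p ∈ lifts (algebraMap R B)) (x : A) :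
    p.eval (algebraMap A B x) ∈ Set.range (algebraMap A B) := by
  obtain ⟨f, rfl⟩ := (mem_lifts _).1 hp
  exact ⟨aeval x f, by rw [eval_map_algebraMap, aeval_algebraMap_apply]⟩

end Rationality

/-- **Lehmer.** For every integer `k ≥ 0`,
`ζ_CB(1-k) = ∑_{n=1}^∞ n^{k-1}/C(2n,n)
  = (2/3)^k ( (1/2) p_{k-1}(1/4) + (π/(3√3)) q_{k-1}(1/4) )`,
and in particular this value lies in `ℚ + ℚ (π/√3)`. -/
theorem cbs_negative_integer_values (k : ℕ) :
    (∑' n : ℕ, ((n : ℝ) + 1) ^ ((k : ℤ) - 1) / (Nat.centralBinom (n + 1) : ℝ) =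
      (2 / 3) ^ k * (1 / 2 * (lehmerP k).eval (1 / 4) +
        Real.pi / (3 * Real.sqrt 3) * (lehmerQ k).eval (1 / 4))) ∧
    ∃ q₁ q₂ : ℚ,
      ∑' n : ℕ, ((n : ℝ) + 1) ^ ((k : ℤ) - 1) / (Nat.centralBinom (n + 1) : ℝ) =
        (q₁ : ℝ) + (q₂ : ℝ) * (Real.pi / Real.sqrt 3) := by
  have hsum := (hasSum_zpow_div_centralBinom k).tsum_eq
  refine ⟨hsum, ?_⟩
  obtain ⟨p, hp⟩ := eval_algebraMap_mem_range_of_mem_lifts (lehmerP_mem_lifts k) (1 / 4 : ℚ)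
  obtain ⟨q, hq⟩ := eval_algebraMap_mem_range_of_mem_lifts (lehmerQ_mem_lifts k) (1 / 4 : ℚ)
  refine ⟨(2 / 3) ^ k * (1 / 2 * p), (2 / 3) ^ k * (q / 3), ?_⟩
  simp only [eq_ratCast] at hp hq
  push_cast at hp hq ⊢
  rw [hsum, ← hp, ← hq]
  field_simp
end

section
/- For every integer n ≥ 0 and all real x: p_n(x) = 2^n · Σ_{k=0}^n C(n+1,k)·E_{n-k}(x,1/2)·E_k(x,1/2), and for every integer n ≥ 0: q_{n-1}(x) = 2^n · E_n(x,1/2). -/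
open Polynomial

/-! Everything rests on the operators `T_{c,y} f = (cX + y) f + X(1 - X) f'`. They satisfy the
Leibniz rule `T_{c+d,a+b}(fg) = (T_{c,a} f) g + f (T_{d,b} g)`. The Eulerian polynomials are
generated by `e_{n+1} = T_{n,y} e_n`, and Lehmer's recursion for `q_n` is the case `y = 1/2`, up
to powers of `2`; the Leibniz rule together with Pascal's identity turns the binomial convolution
of two Eulerian families into a solution of the recursion for `p_n`.

The same operators govern the generating function `F(t) = (1-x)/(e^{t(x-1)} - x)`. If `A = F'/F`
and `z = x e^{t(1-x)}`, then `A' = A² z` and `z' = A z (1 - z)`, so that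
`(F^y A^n f(z))' = F^y A^{n+1} (T_{n,y} f)(z)`. By induction the `n`-th derivative of `F^y` is
`F^y A^n e_n(z)`, whose value at `t = 0` is `e_n(x)`.
-/

open Filter Finset Topology

section EulerianPolynomials

variable {R : Type*} [CommRing R]

/-- The operator `f ↦ (cX + y) f + X(1 - X) f'`, which with `c = n` raises the `n`-th bivariate
Eulerian polynomial to the next one. The slope `c` is a ring element, because Lehmer's recursion
also uses `c = -1`. -/
noncomputable def eulerianOp (c y : R) : R[X] →ₗ[R] R[X] :=
  LinearMap.mulLeft R (C c * X + C y) + LinearMap.mulLeft R (X * (1 - X)) ∘ₗ derivative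

theorem eulerianOp_apply (c y : R) (f : R[X]) :
    eulerianOp c y f = (C c * X + C y) * f + X * (1 - X) * derivative f :=
  rfl

theorem eulerianOp_mul (c d a b : R) (f g : R[X]) :
    eulerianOp (c + d) (a + b) (f * g) = eulerianOp c a f * g + f * eulerianOp d b g := by
  simp only [eulerianOp_apply, derivative_mul, C_add]
  ring

/-- The bivariate Eulerian polynomial `E_n(X, y)`, as a polynomial in its first variable, defined by
its differential recursion. -/
noncomputable def eulerianPoly (y : R) : ℕ → R[X]
  | 0 => 1
  | n + 1 => eulerianOp (n : R) y (eulerianPoly y n)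

@[simp]
theorem eulerianPoly_zero (y : R) : eulerianPoly y 0 = 1 :=
  rfl

theorem eulerianPoly_succ (y : R) (n : ℕ) :
    eulerianPoly y (n + 1) = eulerianOp (n : R) y (eulerianPoly y n) :=
  rfl

theorem eulerianOp_eulerianPoly_mul (a b : R) (i j : ℕ) :
    eulerianOp ((i + j : ℕ) : R) (a + b) (eulerianPoly a i * eulerianPoly b j) =
      eulerianPoly a i * eulerianPoly b (j + 1) + eulerianPoly a (i + 1) * eulerianPoly b j := by
  rw [Nat.cast_add, eulerianOp_mul, ← eulerianPoly_succ, ← eulerianPoly_succ, add_comm]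

theorem sum_antidiagonal_succ_choose_nsmul {M : Type*} [AddCommMonoid M] (f : ℕ → ℕ → M) (n : ℕ) :
    ∑ ij ∈ antidiagonal (n + 1), (n + 2).choose ij.1 • f ij.1 ij.2 =
      ∑ ij ∈ antidiagonal n, (n + 1).choose ij.1 • (f ij.1 (ij.2 + 1) + f (ij.1 + 1) ij.2) +
        f (n + 1) 0 := by
  have shift : f 0 (n + 1) +
        ∑ ij ∈ antidiagonal n, (n + 1).choose (ij.1 + 1) • f (ij.1 + 1) ij.2 =
      f (n + 1) 0 + ∑ ij ∈ antidiagonal n, (n + 1).choose ij.1 • f ij.1 (ij.2 + 1) := by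
    simpa using (Nat.sum_antidiagonal_succ (n := n)
      (f := fun ij => (n + 1).choose ij.1 • f ij.1 ij.2)).symm.trans Nat.sum_antidiagonal_succ'
  simp only [Nat.sum_antidiagonal_succ, Nat.choose_succ_succ' (n + 1), Nat.choose_zero_right,
    one_nsmul, add_nsmul, nsmul_add, sum_add_distrib]
  rw [add_left_comm, shift]
  abel

/-- The binomial convolution `∑_{i+j=n} C(n+1,i) E_i(X,a) E_j(X,b)` of two families of Eulerian
polynomials. The upper index `n + 1` is one more than `i + j`, as in the formula for `p_n`. -/
noncomputable def eulerianConv (a b : R) (n : ℕ) : R[X] :=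
  ∑ ij ∈ antidiagonal n, (n + 1).choose ij.1 • (eulerianPoly a ij.1 * eulerianPoly b ij.2)

@[simp]
theorem eulerianConv_zero (a b : R) : eulerianConv a b 0 = 1 := by
  simp [eulerianConv]

theorem eulerianConv_succ (a b : R) (n : ℕ) :
    eulerianConv a b (n + 1) =
      eulerianOp (n : R) (a + b) (eulerianConv a b n) + eulerianPoly a (n + 1) := by
  have leibniz : ∀ ij ∈ antidiagonal n,
      eulerianOp (n : R) (a + b) (eulerianPoly a ij.1 * eulerianPoly b ij.2) =
        eulerianPoly a ij.1 * eulerianPoly b (ij.2 + 1) +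
          eulerianPoly a (ij.1 + 1) * eulerianPoly b ij.2 := fun ij hij => by
    rw [← eulerianOp_eulerianPoly_mul, mem_antidiagonal.mp hij]
  simp only [eulerianConv, map_sum, map_nsmul]
  rw [sum_antidiagonal_succ_choose_nsmul fun i j => eulerianPoly a i * eulerianPoly b j,
    eulerianPoly_zero, mul_one]
  exact congrArg (· + _) (sum_congr rfl fun ij hij => by rw [leibniz ij hij])

end EulerianPolynomials

section LehmerPolynomials

theorem lehmerQ_succ (n : ℕ) :
    lehmerQ (n + 1) = (2 : ℝ) • eulerianOp (n : ℝ) (1 / 2) (lehmerQ n) := by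
  have hC : (C (1 / 2) : ℝ[X]) * 2 = 1 := by rw [← C_ofNat, ← C_mul]; norm_num
  simp only [lehmerQ, eulerianOp_apply, smul_eq_C_mul, C_mul, C_ofNat]
  linear_combination -lehmerQ n * hC

theorem lehmerP_succ (n : ℕ) :
    lehmerP (n + 1) = (2 : ℝ) • eulerianOp ((n : ℝ) - 1) 1 (lehmerP n) + lehmerQ n := by
  simp only [lehmerP, eulerianOp_apply, smul_eq_C_mul, C_ofNat, C_1]
  ring

theorem lehmerQ_eq_smul_eulerianPoly (n : ℕ) :
    lehmerQ n = (2 : ℝ) ^ n • eulerianPoly (1 / 2) n := by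
  induction n with
  | zero => simp [lehmerQ]
  | succ n ih => rw [lehmerQ_succ, ih, map_smul, smul_smul, ← pow_succ', eulerianPoly_succ]

theorem lehmerP_succ_eq_smul_eulerianConv (n : ℕ) :
    lehmerP (n + 1) = (2 : ℝ) ^ n • eulerianConv (1 / 2) (1 / 2) n := by
  induction n with
  | zero => simp [lehmerP, lehmerQ]
  | succ n ih =>
    rw [lehmerP_succ, ih, lehmerQ_eq_smul_eulerianPoly, eulerianConv_succ, Nat.cast_succ,
      add_sub_cancel_right, add_halves, map_smul, smul_smul, ← pow_succ', smul_add]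

end LehmerPolynomials

section Calculus

variable {𝕜 : Type*} [NontriviallyNormedField 𝕜]

theorem iteratedDeriv_eventuallyEq_of_hasDerivAt {V : Type*} [NormedAddCommGroup V]
    [NormedSpace 𝕜 V] {f : ℕ → 𝕜 → V} {t₀ : 𝕜}
    (hf : ∀ n, ∀ᶠ t in 𝓝 t₀, HasDerivAt (f n) (f (n + 1) t) t) (n : ℕ) :
    iteratedDeriv n (f 0) =ᶠ[𝓝 t₀] f n := by
  induction n with
  | zero => rw [iteratedDeriv_zero]
  | succ n ih =>
    rw [iteratedDeriv_succ]
    exact ih.deriv.trans ((hf n).mono fun t ht => ht.deriv)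

theorem eq_iteratedDeriv_of_hasSum [CompleteSpace 𝕜] [CharZero 𝕜] {a : ℕ → 𝕜} {f : 𝕜 → 𝕜}
    (h : ∀ᶠ t in 𝓝 0, HasSum (fun n => a n * t ^ n / (n.factorial : 𝕜)) (f t)) (n : ℕ) :
    a n = iteratedDeriv n f 0 := by
  have hf : HasFPowerSeriesAt f
      (FormalMultilinearSeries.ofScalars 𝕜 fun n => a n / (n.factorial : 𝕜)) 0 := by
    rw [hasFPowerSeriesAt_iff]
    filter_upwards [h] with t ht
    simpa only [FormalMultilinearSeries.coeff_ofScalars, smul_eq_mul, zero_add,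
      mul_comm (a _), mul_div_assoc] using ht
  have hcoeff : a n / (n.factorial : 𝕜) = iteratedDeriv n f 0 / (n.factorial : 𝕜) := by
    simpa only [FormalMultilinearSeries.coeff_ofScalars] using
      congrArg (·.coeff n) (hf.eq_formalMultilinearSeries hf.analyticAt.hasFPowerSeriesAt)
  exact (div_left_inj' (Nat.cast_ne_zero.mpr n.factorial_ne_zero)).mp hcoeff

theorem hasDerivAt_mul_pow_mul_eval_eulerianOp {G A z : 𝕜 → 𝕜} {y t : 𝕜}
    (hG : HasDerivAt G (y * A t * G t) t) (hA : HasDerivAt A (A t ^ 2 * z t) t)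
    (hz : HasDerivAt z (A t * (z t * (1 - z t))) t) (n : ℕ) (f : 𝕜[X]) :
    HasDerivAt (fun s => G s * A s ^ n * f.eval (z s))
      (G t * A t ^ (n + 1) * (eulerianOp (n : 𝕜) y f).eval (z t)) t := by
  have hf := (f.hasDerivAt (z t)).comp t hz
  have hpow : (n : 𝕜) * A t ^ (n - 1) * (A t ^ 2 * z t) = n * A t ^ (n + 1) * z t := by
    cases n with
    | zero => simp
    | succ n => rw [Nat.add_sub_cancel]; ring
  refine ((hG.mul (hA.pow n)).mul hf).congr_deriv ?_
  simp only [Function.comp, Pi.mul_apply, Pi.pow_apply, hpow, eulerianOp_apply, eval_add, eval_mul,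
    eval_sub, eval_C, eval_X, eval_one]
  ring

end Calculus

section GeneratingFunction

variable {x t : ℝ}

/-- The exponential generating function `(1-x)/(e^{t(x-1)} - x)` of the Eulerian polynomials
`E_n(x,1)`; its `y`-th power is the one of `E_n(x,y)`. -/
noncomputable def eulerianGen (x t : ℝ) : ℝ :=
  (1 - x) / (Real.exp (t * (x - 1)) - x)

/-- The curve `z(t) = x e^{t(1-x)}` along which the derivatives of `eulerianGen` are expressed by
Eulerian polynomials. -/
noncomputable def eulerianCurve (x t : ℝ) : ℝ :=
  x * Real.exp (t * (1 - x))

/-- The logarithmic derivative `(1-x)/(1-z(t))` of `eulerianGen`, with `z(t)` the point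
`eulerianCurve x t`. -/
noncomputable def eulerianRate (x t : ℝ) : ℝ :=
  (1 - x) / (1 - eulerianCurve x t)

@[simp]
theorem eulerianCurve_zero (x : ℝ) : eulerianCurve x 0 = x := by
  simp [eulerianCurve]

theorem eulerianRate_zero (hx : x ≠ 1) : eulerianRate x 0 = 1 := by
  simp [eulerianRate, div_self (sub_ne_zero.mpr hx.symm)]

theorem eulerianGen_zero (hx : x ≠ 1) : eulerianGen x 0 = 1 := by
  simp [eulerianGen, div_self (sub_ne_zero.mpr hx.symm)]

theorem eventually_eulerianGen_pos (hx : x ≠ 1) : ∀ᶠ t in 𝓝 0, 0 < eulerianGen x t := by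
  have hcont : ContinuousAt (eulerianGen x) 0 :=
    ContinuousAt.div (by fun_prop) (by fun_prop) (by simpa [sub_eq_zero] using hx.symm)
  exact hcont.eventually_const_lt (by simp [eulerianGen_zero hx])

theorem eulerianGen_eq_rate_mul_exp (x t : ℝ) :
    eulerianGen x t = eulerianRate x t * Real.exp (t * (1 - x)) := by
  have hexp : Real.exp (t * (x - 1)) = (Real.exp (t * (1 - x)))⁻¹ := by
    rw [← Real.exp_neg]
    ring_nf
  have hden : Real.exp (t * (x - 1)) - x = (1 - eulerianCurve x t) / Real.exp (t * (1 - x)) := by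
    rw [hexp, eulerianCurve]
    field_simp
  rw [eulerianGen, hden, eulerianRate, div_div_eq_mul_div, div_mul_eq_mul_div]

theorem eulerianCurve_ne_one (h : 0 < eulerianGen x t) : eulerianCurve x t ≠ 1 := by
  intro hz
  simp [eulerianGen_eq_rate_mul_exp, eulerianRate, hz] at h

theorem eulerianRate_mul_one_sub_curve (hz : eulerianCurve x t ≠ 1) :
    eulerianRate x t * (1 - eulerianCurve x t) = 1 - x :=
  div_mul_cancel₀ _ (sub_ne_zero.mpr hz.symm)

theorem hasDerivAt_exp_mul_one_sub (hz : eulerianCurve x t ≠ 1) :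
    HasDerivAt (fun s => Real.exp (s * (1 - x)))
      (Real.exp (t * (1 - x)) * (eulerianRate x t * (1 - eulerianCurve x t))) t := by
  rw [eulerianRate_mul_one_sub_curve hz]
  exact (hasDerivAt_mul_const (1 - x)).exp

theorem hasDerivAt_eulerianCurve (hz : eulerianCurve x t ≠ 1) :
    HasDerivAt (eulerianCurve x)
      (eulerianRate x t * (eulerianCurve x t * (1 - eulerianCurve x t))) t := by
  refine ((hasDerivAt_exp_mul_one_sub hz).const_mul x).congr_deriv ?_
  rw [← mul_assoc, ← eulerianCurve, mul_left_comm]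

theorem hasDerivAt_eulerianRate (hz : eulerianCurve x t ≠ 1) :
    HasDerivAt (eulerianRate x) (eulerianRate x t ^ 2 * eulerianCurve x t) t := by
  have hz' : 1 - eulerianCurve x t ≠ 0 := sub_ne_zero.mpr hz.symm
  refine ((hasDerivAt_const t (1 - x)).div
    ((hasDerivAt_eulerianCurve hz).const_sub 1) hz').congr_deriv ?_
  rw [eulerianRate]
  field_simp
  ring

theorem hasDerivAt_eulerianGen (hz : eulerianCurve x t ≠ 1) :
    HasDerivAt (eulerianGen x) (eulerianRate x t * eulerianGen x t) t := by
  rw [funext (eulerianGen_eq_rate_mul_exp x)]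
  refine ((hasDerivAt_eulerianRate hz).mul (hasDerivAt_exp_mul_one_sub hz)).congr_deriv ?_
  ring

theorem hasDerivAt_eulerianGen_rpow (y : ℝ) (h : 0 < eulerianGen x t) :
    HasDerivAt (fun s => eulerianGen x s ^ y) (y * eulerianRate x t * eulerianGen x t ^ y) t := by
  refine ((hasDerivAt_eulerianGen (eulerianCurve_ne_one h)).rpow_const
    (p := y) (Or.inl h.ne')).congr_deriv ?_
  rw [Real.rpow_sub_one h.ne']
  field_simp

theorem iteratedDeriv_eulerianGen_rpow (hx : x ≠ 1) (y : ℝ) (n : ℕ) :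
    iteratedDeriv n (fun t => eulerianGen x t ^ y) =ᶠ[𝓝 0] fun t =>
      eulerianGen x t ^ y * eulerianRate x t ^ n * (eulerianPoly y n).eval (eulerianCurve x t) := by
  have hderiv : ∀ n, ∀ᶠ t in 𝓝 0, HasDerivAt
      (fun s => eulerianGen x s ^ y * eulerianRate x s ^ n *
        (eulerianPoly y n).eval (eulerianCurve x s))
      (eulerianGen x t ^ y * eulerianRate x t ^ (n + 1) *
        (eulerianPoly y (n + 1)).eval (eulerianCurve x t)) t := fun n => by
    filter_upwards [eventually_eulerianGen_pos hx] with t ht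
    have hz := eulerianCurve_ne_one ht
    exact hasDerivAt_mul_pow_mul_eval_eulerianOp
      (hasDerivAt_eulerianGen_rpow y ht) (hasDerivAt_eulerianRate hz)
      (hasDerivAt_eulerianCurve hz) n _
  simpa using iteratedDeriv_eventuallyEq_of_hasDerivAt hderiv n

theorem eq_eval_eulerianPoly_of_hasSum (hx : x ≠ 1) {y : ℝ} {a : ℕ → ℝ}
    (h : ∀ᶠ t in 𝓝 0, HasSum (fun n => a n * t ^ n / (n.factorial : ℝ)) (eulerianGen x t ^ y))
    (n : ℕ) : a n = (eulerianPoly y n).eval x := by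
  rw [eq_iteratedDeriv_of_hasSum h, (iteratedDeriv_eulerianGen_rpow hx y n).self_of_nhds]
  simp [eulerianGen_zero hx, eulerianRate_zero hx]

end GeneratingFunction

/-- **(Bényi–Matsusaka.)** If `E n x y` is the family of bivariate Eulerian polynomials,
characterized by the exponential generating function
`∑_{n≥0} E_n(x,y) tⁿ/n! = ((1-x)/(e^{t(x-1)} - x))^y` (for `t` near `0`), then for every
`n ≥ 0`: `p_n(x) = 2ⁿ ∑_{k=0}^n C(n+1,k) E_{n-k}(x,1/2) E_k(x,1/2)` and
`q_{n-1}(x) = 2ⁿ E_n(x,1/2)`. -/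
theorem lehmer_poly_eq_eulerian (E : ℕ → ℝ → ℝ → ℝ)
    (hE : ∀ x y : ℝ, x ≠ 1 → ∃ ε > 0, ∀ t : ℝ, |t| < ε →
      HasSum (fun n : ℕ => E n x y * t ^ n / (Nat.factorial n : ℝ))
        (((1 - x) / (Real.exp (t * (x - 1)) - x)) ^ y)) :
    (∀ n : ℕ, ∀ x : ℝ, x ≠ 1 →
      (lehmerP (n + 1)).eval x =
        2 ^ n * ∑ k ∈ Finset.range (n + 1),
          (Nat.choose (n + 1) k : ℝ) * E (n - k) x (1 / 2) * E k x (1 / 2)) ∧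
    (∀ n : ℕ, ∀ x : ℝ, x ≠ 1 →
      (lehmerQ n).eval x = 2 ^ n * E n x (1 / 2)) := by
  have hEval (x : ℝ) (hx : x ≠ 1) (n : ℕ) : E n x (1 / 2) = (eulerianPoly (1 / 2) n).eval x := by
    obtain ⟨ε, hε, hsum⟩ := hE x (1 / 2) hx
    refine eq_eval_eulerianPoly_of_hasSum (a := fun n => E n x (1 / 2)) hx ?_ n
    filter_upwards [Metric.ball_mem_nhds 0 hε] with t ht
    exact hsum t (by simpa using ht)
  refine ⟨fun n x hx => ?_, fun n x hx => ?_⟩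
  · rw [lehmerP_succ_eq_smul_eulerianConv, eval_smul, smul_eq_mul, eulerianConv,
      Nat.sum_antidiagonal_eq_sum_range_succ fun i j =>
        (n + 1).choose i • (eulerianPoly (1 / 2 : ℝ) i * eulerianPoly (1 / 2) j), eval_finsetSum]
    refine congrArg _ (sum_congr rfl fun k _ => ?_)
    rw [hEval x hx, hEval x hx, eval_smul, eval_mul, nsmul_eq_mul]
    ring
  · rw [lehmerQ_eq_smul_eulerianPoly, eval_smul, smul_eq_mul, hEval x hx]
end

section
/- For every integer n ≥ 0, (2/3)^n · p_n(1/4) = Σ_{k=0}^n B_{n-k}^{(-k)}, where B_m^{(j)} are poly-Bernoulli numbers. -/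
open Polynomial

/-!
For fixed `k`, `∑_m (m + 1)^k zᵐ` is a polynomial in `1 / (1 - z)`, so at `z = 1 - e⁻ᵗ` the
generating function of the `B_n^{(-k)}` is a polynomial in `eᵗ`. Summing over `k` as well gives
`F(x, y) = ∑_{k, l} B_l^{(-k)} xᵏ/k! yˡ/l! = eˣ⁺ʸ / (eˣ + eʸ - eˣ⁺ʸ)`.

The antidiagonal sum `∑_{k ≤ n} B_{n-k}^{(-k)}` is the derivative of order `n + 1` at `0` of
`T(t) = ∫₀ᵗ F(s, t - s) ds`, by the beta integral. On the segment `x + y = t` the product `eˣ⁺ʸ` is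
constant, and `(4 - eˣ⁺ʸ) ∂F/∂y - 2 F` is the derivative of `(eˣ - 2) F` along it; integration gives
`(4 - eᵗ) T' = 2 T + 3 eᵗ`. With `u = eᵗ/4` this reads `2 (1 - u) T' = T + 6 u`, and Lehmer's
recursions are exactly those satisfied by the polynomials in `u` that express the iterated
derivatives of a solution in terms of it. At `t = 0` one has `T = 0` and `u = 1/4`, which leaves
only `p_n(1/4)`.
-/

open scoped PowerSeries Nat
open Finset.HasAntidiagonal (antidiagonal)

section NegPolylog

/-- The polynomials `P_k` with `∑_{m ≥ 0} (m + 1)^k zᵐ = P_k(1 / (1 - z))`, that is, the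
polylogarithm of order `-k` divided by `z`, as a function of `1 / (1 - z)`. -/
noncomputable def negPolylogPolynomial (R : Type*) [CommRing R] : ℕ → R[X]
  | 0 => X
  | k + 1 => negPolylogPolynomial R k + (X ^ 2 - X) * derivative (negPolylogPolynomial R k)

lemma aeval_negPolylogPolynomial_succ {R A : Type*} [CommRing R] [CommRing A] [Algebra R A]
    (D : Derivation R A A) {g w : A} (hg : w * D g = g ^ 2 - g) (k : ℕ) :
    aeval g (negPolylogPolynomial R (k + 1)) =
      aeval g (negPolylogPolynomial R k) + w * D (aeval g (negPolylogPolynomial R k)) := by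
  simp only [negPolylogPolynomial, map_add, map_mul, map_sub, map_pow, aeval_X,
    Derivation.map_aeval, smul_eq_mul]
  linear_combination -aeval g (derivative (negPolylogPolynomial R k)) * hg

lemma X_mul_derivative_mk_one (R : Type*) [CommRing R] :
    PowerSeries.X * d⁄dX R (PowerSeries.mk 1) =
      (PowerSeries.mk 1 : R⟦X⟧) ^ 2 - PowerSeries.mk 1 := by
  ext n
  rw [PowerSeries.mk_one_pow_eq_mk_choose_add]
  cases n with
  | zero => simp
  | succ n => simp [PowerSeries.coeff_succ_X_mul, PowerSeries.coeff_derivative]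

lemma aeval_mk_one_negPolylogPolynomial (R : Type*) [CommRing R] (k : ℕ) :
    aeval (PowerSeries.mk 1 : R⟦X⟧) (negPolylogPolynomial R k) =
      PowerSeries.mk fun m => ((m : R) + 1) ^ k := by
  induction k with
  | zero => ext; simp [negPolylogPolynomial]
  | succ k ih =>
    rw [aeval_negPolylogPolynomial_succ (d⁄dX R) (X_mul_derivative_mk_one R), ih]
    ext m
    cases m with
    | zero => simp
    | succ m =>
      simp only [map_add, PowerSeries.coeff_mk, PowerSeries.coeff_succ_X_mul,
        PowerSeries.coeff_derivative, Nat.cast_succ]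
      ring

end NegPolylog

section PowerSeriesSums

lemma eq_of_eventually_hasSum_mul_pow {𝕜 : Type*} [NontriviallyNormedField 𝕜] {a b : ℕ → 𝕜}
    {f : 𝕜 → 𝕜}
    (ha : ∀ᶠ t in nhds 0, HasSum (fun n => a n * t ^ n) (f t))
    (hb : ∀ᶠ t in nhds 0, HasSum (fun n => b n * t ^ n) (f t)) : a = b := by
  have hseries {c : ℕ → 𝕜} (hc : ∀ᶠ t in nhds 0, HasSum (fun n => c n * t ^ n) (f t)) :
      HasFPowerSeriesAt f (FormalMultilinearSeries.ofScalars 𝕜 c) 0 := by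
    rw [hasFPowerSeriesAt_iff]
    simpa [mul_comm] using hc
  exact FormalMultilinearSeries.ofScalars_series_injective 𝕜 𝕜
    ((hseries ha).eq_formalMultilinearSeries (hseries hb))

variable {𝕜 : Type*} [RCLike 𝕜]

lemma hasSum_coeff_mul_mul_pow {f g : 𝕜⟦X⟧} {t a b : 𝕜}
    (hf : HasSum (fun n => PowerSeries.coeff n f * t ^ n) a)
    (hg : HasSum (fun n => PowerSeries.coeff n g * t ^ n) b) :
    HasSum (fun n => PowerSeries.coeff n (f * g) * t ^ n) (a * b) := by
  have hterm (n : ℕ) : PowerSeries.coeff n (f * g) * t ^ n =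
      ∑ p ∈ antidiagonal n,
        (PowerSeries.coeff p.1 f * t ^ p.1) * (PowerSeries.coeff p.2 g * t ^ p.2) := by
    rw [PowerSeries.coeff_mul, Finset.sum_mul]
    refine Finset.sum_congr rfl fun p hp => ?_
    rw [← Finset.HasAntidiagonal.mem_antidiagonal.1 hp, pow_add]
    ring
  have hf' := summable_norm_iff.2 hf.summable
  have hg' := summable_norm_iff.2 hg.summable
  simp only [hterm]
  rw [← hf.tsum_eq, ← hg.tsum_eq,
    tsum_mul_tsum_eq_tsum_sum_antidiagonal_of_summable_norm hf' hg']
  exact (summable_norm_sum_mul_antidiagonal_of_summable_norm hf' hg').of_norm.hasSum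

lemma hasSum_coeff_aeval_mul_pow {f : 𝕜⟦X⟧} {t a : 𝕜}
    (hf : HasSum (fun n => PowerSeries.coeff n f * t ^ n) a) (P : 𝕜[X]) :
    HasSum (fun n => PowerSeries.coeff n (aeval f P) * t ^ n) (P.eval a) := by
  have hconst (r : 𝕜) : HasSum (fun n => PowerSeries.coeff n (PowerSeries.C r) * t ^ n) r := by
    convert hasSum_single (f := fun n => PowerSeries.coeff n (PowerSeries.C r) * t ^ n) 0 ?_
    · simp
    · intro n hn
      simp [PowerSeries.coeff_C, hn]
  induction P using Polynomial.induction_on' with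
  | add P Q hP hQ => simpa [add_mul] using hP.add hQ
  | monomial m r =>
    rw [aeval_monomial, eval_monomial]
    refine hasSum_coeff_mul_mul_pow (hconst r) ?_
    induction m with
    | zero => simpa using hconst 1
    | succ m ih => simpa only [pow_succ] using hasSum_coeff_mul_mul_pow ih hf

lemma hasSum_add_one_pow_mul_pow (k : ℕ) {z : 𝕜} (hz : ‖z‖ < 1) :
    HasSum (fun m : ℕ => ((m : 𝕜) + 1) ^ k * z ^ m)
      ((negPolylogPolynomial 𝕜 k).eval (1 - z)⁻¹) := by
  have hgeom : HasSum (fun m => PowerSeries.coeff m (PowerSeries.mk 1) * z ^ m) (1 - z)⁻¹ := by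
    simpa using hasSum_geometric_of_norm_lt_one hz
  simpa [aeval_mk_one_negPolylogPolynomial] using
    hasSum_coeff_aeval_mul_pow hgeom (negPolylogPolynomial 𝕜 k)

lemma hasSum_coeff_exp_mul_pow (t : ℝ) :
    HasSum (fun n => PowerSeries.coeff n (PowerSeries.exp ℝ) * t ^ n) (Real.exp t) := by
  rw [Real.exp_eq_exp_ℝ]
  simpa [PowerSeries.coeff_exp, div_eq_inv_mul] using NormedSpace.expSeries_div_hasSum_exp t

lemma polyBernoulli_neg_eq_factorial_mul_coeff (k : ℕ) (b : ℕ → ℝ)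
    (hb : ∃ ε > 0, ∀ t : ℝ, |t| < ε →
      HasSum (fun n : ℕ => b n * t ^ n / (n ! : ℝ))
        (∑' m : ℕ, (1 - Real.exp (-t)) ^ m / ((m : ℝ) + 1) ^ (-(k : ℤ)))) (n : ℕ) :
    b n = n ! * PowerSeries.coeff n (aeval (PowerSeries.exp ℝ) (negPolylogPolynomial ℝ k)) := by
  obtain ⟨ε, hε, hsum⟩ := hb
  have hnear : ∀ᶠ t : ℝ in nhds 0, ‖1 - Real.exp (-t)‖ < 1 := by
    have hc : Continuous fun t : ℝ => ‖1 - Real.exp (-t)‖ := by fun_prop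
    exact hc.continuousAt.eventually_lt_const (by simp)
  have htsum {t : ℝ} (ht : ‖1 - Real.exp (-t)‖ < 1) :
      ∑' m : ℕ, (1 - Real.exp (-t)) ^ m / ((m : ℝ) + 1) ^ (-(k : ℤ)) =
        (negPolylogPolynomial ℝ k).eval (Real.exp t) := by
    simpa [Real.exp_neg, mul_comm] using (hasSum_add_one_pow_mul_pow k ht).tsum_eq
  have hcoeff := congrFun (eq_of_eventually_hasSum_mul_pow
    (a := fun n => b n / n !) (f := fun t => (negPolylogPolynomial ℝ k).eval (Real.exp t)) ?_
    (.of_forall fun t => hasSum_coeff_aeval_mul_pow (hasSum_coeff_exp_mul_pow t) _)) n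
  · rw [← hcoeff]
    field_simp
  · filter_upwards [hnear, Metric.ball_mem_nhds 0 hε] with t ht htε
    have h := hsum t (by simpa using htε)
    rw [htsum ht] at h
    simpa only [div_mul_eq_mul_div] using h

end PowerSeriesSums

section PolyBernoulliSeries

/-- The derivation of `A⟦X⟧` that applies a derivation `D` of `A` to every coefficient. For
`A = K⟦X⟧` and `D = d⁄dX K` it is the partial derivative with respect to the inner variable. -/
noncomputable def coeffwiseDerivation {R A : Type*} [CommSemiring R] [CommRing A] [Algebra R A]
    (D : Derivation R A A) : Derivation R A⟦X⟧ A⟦X⟧ :=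
  Derivation.mk'
    { toFun := fun f => PowerSeries.mk fun n => D (PowerSeries.coeff n f)
      map_add' := fun f g => by ext; simp
      map_smul' := fun r f => by ext; simp }
    fun f g => by
      ext n
      simp only [LinearMap.coe_mk, AddHom.coe_mk, smul_eq_mul, map_add, PowerSeries.coeff_mk]
      rw [mul_comm g]
      simp only [PowerSeries.coeff_mul, PowerSeries.coeff_mk, map_sum, Derivation.leibniz,
        smul_eq_mul, Finset.sum_add_distrib, mul_comm (PowerSeries.coeff _ g)]

@[simp]
lemma coeff_coeffwiseDerivation {R A : Type*} [CommSemiring R] [CommRing A] [Algebra R A]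
    (D : Derivation R A A) (f : A⟦X⟧) (n : ℕ) :
    PowerSeries.coeff n (coeffwiseDerivation D f) = D (PowerSeries.coeff n f) := by
  simp [coeffwiseDerivation]

variable {K : Type*} [Field K]

local notation "∂x" => d⁄dX (PowerSeries K)
local notation "∂y" => coeffwiseDerivation (d⁄dX K)

/-- The formal version of `G ↦ ∫₀ᵗ G(s, t - s) ds`, where `K⟦X⟧⟦X⟧` is read as series `G(x, y)`
with outer variable `x`. The beta integral
`∫₀ᵗ sᵏ (t - s)ˡ ds = k! l! / (k + l + 1)! tᵏ⁺ˡ⁺¹` gives its coefficients. -/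
noncomputable def antidiagonalIntegral : K⟦X⟧⟦X⟧ →ₗ[K] K⟦X⟧ where
  toFun G := PowerSeries.X * PowerSeries.mk fun n =>
    (∑ p ∈ antidiagonal n,
      (p.1 ! : K) * p.2 ! * PowerSeries.coeff p.2 (PowerSeries.coeff p.1 G)) / (n + 1)!
  map_add' F G := by
    rw [← mul_add]
    congr 1
    ext
    simp [mul_add, Finset.sum_add_distrib, add_div]
  map_smul' r G := by
    rw [RingHom.id_apply, ← mul_smul_comm]
    congr 1
    ext
    simp [mul_left_comm _ r, ← Finset.mul_sum, mul_div_assoc]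

@[simp]
lemma constantCoeff_antidiagonalIntegral (G : K⟦X⟧⟦X⟧) :
    PowerSeries.constantCoeff (antidiagonalIntegral G) = 0 := by
  simp [antidiagonalIntegral]

variable [CharZero K]

local notation "eˣ" => PowerSeries.exp (PowerSeries K)
local notation "eʸ" => PowerSeries.C (R := PowerSeries K) (PowerSeries.exp K)

lemma factorial_mul_coeff_succ_antidiagonalIntegral (n : ℕ) (G : K⟦X⟧⟦X⟧) :
    ((n + 1)! : K) * PowerSeries.coeff (n + 1) (antidiagonalIntegral G) =
      ∑ p ∈ antidiagonal n,
        (p.1 ! : K) * p.2 ! * PowerSeries.coeff p.2 (PowerSeries.coeff p.1 G) := by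
  have hn : ((n + 1)! : K) ≠ 0 := Nat.cast_ne_zero.2 (n + 1).factorial_ne_zero
  simp [antidiagonalIntegral, mul_div_cancel₀ _ hn]

lemma factorial_mul_coeff_derivative_antidiagonalIntegral (n : ℕ) (G : K⟦X⟧⟦X⟧) :
    (n ! : K) * PowerSeries.coeff n (d⁄dX K (antidiagonalIntegral G)) =
      ∑ p ∈ antidiagonal n,
        (p.1 ! : K) * p.2 ! * PowerSeries.coeff p.2 (PowerSeries.coeff p.1 G) := by
  rw [← factorial_mul_coeff_succ_antidiagonalIntegral, PowerSeries.coeff_derivative,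
    Nat.factorial_succ]
  push_cast
  ring

lemma derivative_antidiagonalIntegral_outer (G : K⟦X⟧⟦X⟧) :
    d⁄dX K (antidiagonalIntegral G) =
      antidiagonalIntegral (∂x G) + PowerSeries.constantCoeff G := by
  ext n
  have hn : (n ! : K) ≠ 0 := Nat.cast_ne_zero.2 n.factorial_ne_zero
  refine mul_left_cancel₀ hn ?_
  rw [factorial_mul_coeff_derivative_antidiagonalIntegral, map_add, mul_add]
  cases n with
  | zero => simp
  | succ n =>
    rw [factorial_mul_coeff_succ_antidiagonalIntegral, Finset.Nat.sum_antidiagonal_succ, add_comm]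
    congr 1
    · refine Finset.sum_congr rfl fun p _ => ?_
      have hcoeff : PowerSeries.coeff p.2 (PowerSeries.coeff p.1 (∂x G)) =
          (p.1 + 1) * PowerSeries.coeff p.2 (PowerSeries.coeff (p.1 + 1) G) := by
        rw [PowerSeries.coeff_derivative, ← Nat.cast_succ, ← nsmul_eq_mul', map_nsmul,
          nsmul_eq_mul, Nat.cast_succ]
      rw [hcoeff, Nat.factorial_succ]
      push_cast
      ring
    · simp

lemma derivative_antidiagonalIntegral_inner (G : K⟦X⟧⟦X⟧) :
    d⁄dX K (antidiagonalIntegral G) =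
      antidiagonalIntegral (∂y G) + PowerSeries.map PowerSeries.constantCoeff G := by
  ext n
  have hn : (n ! : K) ≠ 0 := Nat.cast_ne_zero.2 n.factorial_ne_zero
  refine mul_left_cancel₀ hn ?_
  rw [factorial_mul_coeff_derivative_antidiagonalIntegral, map_add, mul_add]
  cases n with
  | zero => simp
  | succ n =>
    rw [factorial_mul_coeff_succ_antidiagonalIntegral, Finset.Nat.sum_antidiagonal_succ', add_comm]
    congr 1
    · refine Finset.sum_congr rfl fun p _ => ?_
      rw [coeff_coeffwiseDerivation, PowerSeries.coeff_derivative, Nat.factorial_succ]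
      push_cast
      ring
    · simp

lemma antidiagonalIntegral_outer_sub_inner (G : K⟦X⟧⟦X⟧) :
    antidiagonalIntegral (∂x G - ∂y G) =
      PowerSeries.map PowerSeries.constantCoeff G - PowerSeries.constantCoeff G := by
  rw [map_sub]
  linear_combination derivative_antidiagonalIntegral_inner G -
    derivative_antidiagonalIntegral_outer G

lemma coeffwiseDerivation_exp : ∂y eˣ = 0 := by
  ext n : 1
  rw [coeff_coeffwiseDerivation, PowerSeries.coeff_exp,
    IsScalarTower.algebraMap_apply ℚ K K⟦X⟧, Derivation.map_algebraMap, map_zero]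

lemma coeffwiseDerivation_C_exp : ∂y eʸ = eʸ := by
  ext n : 1
  rw [coeff_coeffwiseDerivation, PowerSeries.coeff_C]
  split_ifs <;> simp [PowerSeries.derivative_exp]

lemma antidiagonalIntegral_exp_mul_exp_mul (G : K⟦X⟧⟦X⟧) :
    antidiagonalIntegral (eˣ * eʸ * G) = PowerSeries.exp K * antidiagonalIntegral G := by
  have hleft (H : K⟦X⟧⟦X⟧) : d⁄dX K (antidiagonalIntegral (eˣ * eʸ * H)) =
      antidiagonalIntegral (eˣ * eʸ * H) + antidiagonalIntegral (eˣ * eʸ * ∂x H) +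
        PowerSeries.exp K * PowerSeries.constantCoeff H := by
    have hD : ∂x (eˣ * eʸ * H) = eˣ * eʸ * H + eˣ * eʸ * ∂x H := by
      simp only [Derivation.leibniz, PowerSeries.derivative_exp, PowerSeries.derivative_C,
        smul_eq_mul]
      ring
    rw [derivative_antidiagonalIntegral_outer, hD, map_add]
    simp
  have hright (H : K⟦X⟧⟦X⟧) : d⁄dX K (PowerSeries.exp K * antidiagonalIntegral H) =
      PowerSeries.exp K * antidiagonalIntegral H +
        PowerSeries.exp K * antidiagonalIntegral (∂x H) +
        PowerSeries.exp K * PowerSeries.constantCoeff H := by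
    rw [Derivation.leibniz, derivative_antidiagonalIntegral_outer, PowerSeries.derivative_exp]
    simp only [smul_eq_mul]
    ring
  ext n
  induction n generalizing G with
  | zero => simp
  | succ n ih =>
    have h : PowerSeries.coeff n (d⁄dX K (antidiagonalIntegral (eˣ * eʸ * G))) =
        PowerSeries.coeff n (d⁄dX K (PowerSeries.exp K * antidiagonalIntegral G)) := by
      rw [hleft, hright]
      simp only [map_add, ih]
    simp only [PowerSeries.coeff_derivative] at h
    exact mul_right_cancel₀ n.cast_add_one_ne_zero h

variable (K)

/-- The denominator `eˣ + eʸ - eˣ⁺ʸ` of the generating function of the poly-Bernoulli numbers of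
non-positive order, in `K⟦X⟧⟦X⟧` with outer variable `x` and inner variable `y`. -/
noncomputable def polyBernoulliDenominator : K⟦X⟧⟦X⟧ :=
  eˣ + eʸ - eˣ * eʸ

/-- The generating function `∑_{k, l} B_l^{(-k)} xᵏ/k! yˡ/l! = eˣ⁺ʸ / (eˣ + eʸ - eˣ⁺ʸ)` of the
poly-Bernoulli numbers of non-positive order. The quotient is a product with `invOfUnit`, since
power series over the ring `K⟦X⟧` have no division. -/
noncomputable def polyBernoulliSeries : K⟦X⟧⟦X⟧ :=
  eˣ * eʸ * PowerSeries.invOfUnit (polyBernoulliDenominator K) 1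

lemma constantCoeff_polyBernoulliDenominator :
    PowerSeries.constantCoeff (polyBernoulliDenominator K) = 1 := by
  simp [polyBernoulliDenominator]

lemma polyBernoulliDenominator_ne_zero : polyBernoulliDenominator K ≠ 0 := fun h => by
  simpa [h] using constantCoeff_polyBernoulliDenominator K

lemma polyBernoulliDenominator_mul_polyBernoulliSeries :
    polyBernoulliDenominator K * polyBernoulliSeries K = eˣ * eʸ := by
  rw [polyBernoulliSeries, mul_left_comm,
    PowerSeries.mul_invOfUnit _ _ (constantCoeff_polyBernoulliDenominator K), mul_one]

lemma polyBernoulliDenominator_mul_derivative_outer :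
    polyBernoulliDenominator K * ∂x (polyBernoulliSeries K) =
      eʸ * polyBernoulliSeries K := by
  have h := polyBernoulliDenominator_mul_polyBernoulliSeries K
  have hD := congrArg (∂x) h
  simp only [polyBernoulliDenominator, Derivation.leibniz, map_add, map_sub,
    PowerSeries.derivative_exp, PowerSeries.derivative_C, smul_eq_mul] at h hD ⊢
  linear_combination hD - h

lemma polyBernoulliDenominator_mul_derivative_inner :
    polyBernoulliDenominator K * ∂y (polyBernoulliSeries K) =
      eˣ * polyBernoulliSeries K := by
  have h := polyBernoulliDenominator_mul_polyBernoulliSeries K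
  have hD := congrArg (∂y) h
  simp only [polyBernoulliDenominator, Derivation.leibniz, map_add, map_sub,
    coeffwiseDerivation_exp, coeffwiseDerivation_C_exp, smul_eq_mul] at h hD ⊢
  linear_combination hD - h

lemma constantCoeff_polyBernoulliSeries :
    PowerSeries.constantCoeff (polyBernoulliSeries K) = PowerSeries.exp K := by
  have h := congrArg PowerSeries.constantCoeff (polyBernoulliDenominator_mul_polyBernoulliSeries K)
  simpa [constantCoeff_polyBernoulliDenominator] using h

lemma map_constantCoeff_polyBernoulliSeries :
    PowerSeries.map PowerSeries.constantCoeff (polyBernoulliSeries K) = PowerSeries.exp K := by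
  have h := congrArg (PowerSeries.map PowerSeries.constantCoeff)
    (polyBernoulliDenominator_mul_polyBernoulliSeries K)
  simpa [polyBernoulliDenominator] using h

lemma derivative_outer_polyBernoulliSeries :
    ∂x (polyBernoulliSeries K) = polyBernoulliSeries K +
      PowerSeries.C (PowerSeries.exp K - 1) * ∂y (polyBernoulliSeries K) := by
  refine mul_left_cancel₀ (polyBernoulliDenominator_ne_zero K) ?_
  have hx := polyBernoulliDenominator_mul_derivative_outer K
  have hy := polyBernoulliDenominator_mul_derivative_inner K
  simp only [polyBernoulliDenominator, map_sub, map_one] at hx hy ⊢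
  linear_combination hx - (eʸ - 1) * hy

lemma factorial_mul_coeff_polyBernoulliSeries (k : ℕ) :
    (k ! : K⟦X⟧) * PowerSeries.coeff k (polyBernoulliSeries K) =
      aeval (PowerSeries.exp K) (negPolylogPolynomial K k) := by
  induction k with
  | zero => simp [negPolylogPolynomial, constantCoeff_polyBernoulliSeries]
  | succ k ih =>
    have hexp : (PowerSeries.exp K - 1) * d⁄dX K (PowerSeries.exp K) =
        PowerSeries.exp K ^ 2 - PowerSeries.exp K := by
      rw [PowerSeries.derivative_exp]
      ring
    have h := congrArg (PowerSeries.coeff k) (derivative_outer_polyBernoulliSeries K)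
    rw [PowerSeries.coeff_derivative, map_add, PowerSeries.coeff_C_mul,
      coeff_coeffwiseDerivation] at h
    rw [aeval_negPolylogPolynomial_succ (d⁄dX K) hexp, ← ih, Nat.factorial_succ,
      Derivation.leibniz, Derivation.map_natCast]
    push_cast
    simp only [smul_eq_mul]
    linear_combination (k ! : K⟦X⟧) * h

/- The right-hand side is the derivative along the segments `x + y = t`, so that integrating over
them leaves only boundary terms. -/
lemma polyBernoulliSeries_pde :
    4 • ∂y (polyBernoulliSeries K) - eˣ * eʸ * ∂y (polyBernoulliSeries K) -
        2 • polyBernoulliSeries K =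
      ∂x (eˣ * polyBernoulliSeries K - 2 • polyBernoulliSeries K) -
        ∂y (eˣ * polyBernoulliSeries K - 2 • polyBernoulliSeries K) := by
  refine mul_left_cancel₀ (polyBernoulliDenominator_ne_zero K) ?_
  have hx := polyBernoulliDenominator_mul_derivative_outer K
  have hy := polyBernoulliDenominator_mul_derivative_inner K
  simp only [Derivation.leibniz, map_sub, map_nsmul, PowerSeries.derivative_exp,
    coeffwiseDerivation_exp, smul_eq_mul]
  simp only [polyBernoulliDenominator] at hx hy ⊢
  linear_combination (2 - eˣ * eʸ + eˣ) * hy - (eˣ - 2) * hx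

lemma antidiagonalIntegral_polyBernoulliSeries_ode :
    2 * (1 - PowerSeries.C (1 / 4) * PowerSeries.exp K) *
        d⁄dX K (antidiagonalIntegral (polyBernoulliSeries K)) =
      antidiagonalIntegral (polyBernoulliSeries K) +
        PowerSeries.C 6 * (PowerSeries.C (1 / 4) * PowerSeries.exp K) := by
  have hpde := congrArg antidiagonalIntegral (polyBernoulliSeries_pde K)
  rw [antidiagonalIntegral_outer_sub_inner] at hpde
  simp only [map_sub, map_nsmul, antidiagonalIntegral_exp_mul_exp_mul, map_mul,
    PowerSeries.map_exp, PowerSeries.constantCoeff_exp, constantCoeff_polyBernoulliSeries,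
    map_constantCoeff_polyBernoulliSeries] at hpde
  have hderiv := derivative_antidiagonalIntegral_inner (polyBernoulliSeries K)
  rw [map_constantCoeff_polyBernoulliSeries] at hderiv
  have hquarter : 4 * PowerSeries.C (1 / 4 : K) = 1 := by
    rw [← map_ofNat PowerSeries.C 4, ← map_mul]
    norm_num
  rw [map_ofNat PowerSeries.C 6]
  linear_combination 2 * PowerSeries.C (1 / 4 : K) * (hpde + (4 - PowerSeries.exp K) * hderiv) -
    (2 * d⁄dX K (antidiagonalIntegral (polyBernoulliSeries K)) -
      antidiagonalIntegral (polyBernoulliSeries K)) * hquarter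

lemma sum_antidiagonal_factorial_mul_coeff_aeval_exp (n : ℕ) :
    ∑ p ∈ antidiagonal n, (p.2 ! : K) *
        PowerSeries.coeff p.2 (aeval (PowerSeries.exp K) (negPolylogPolynomial K p.1)) =
      (n + 1)! * PowerSeries.coeff (n + 1) (antidiagonalIntegral (polyBernoulliSeries K)) := by
  rw [factorial_mul_coeff_succ_antidiagonalIntegral]
  refine Finset.sum_congr rfl fun p _ => ?_
  rw [← factorial_mul_coeff_polyBernoulliSeries, ← nsmul_eq_mul p.1 !, map_nsmul, nsmul_eq_mul]
  ring

end PolyBernoulliSeries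

section Lehmer

variable {A : Type*} [CommRing A] [Algebra ℝ A] (D : Derivation ℝ A A)

lemma pow_mul_iterate_derivation_eq_lehmer {a g y : A} (ha : D a = 0) (hy : D y = y)
    (hg : 2 * (1 - y) * D g = g + a * y) (n : ℕ) :
    (2 * (1 - y)) ^ n * D^[n] g = aeval y (lehmerQ n) * g + a * y * aeval y (lehmerP n) := by
  induction n with
  | zero => simp [lehmerQ, lehmerP]
  | succ n ih =>
    have h2 : D 2 = 0 := D.map_natCast 2
    have hpow : 2 * (1 - y) * D ((2 * (1 - y)) ^ n) = -(2 * n * y * (2 * (1 - y)) ^ n) := by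
      rw [D.leibniz_pow, D.leibniz, h2, map_sub, hy, D.map_one_eq_zero]
      cases n with
      | zero => simp
      | succ n =>
        simp only [Nat.add_sub_cancel, smul_eq_mul, nsmul_eq_mul]
        ring
    have hq : aeval y (lehmerQ (n + 1)) =
        (2 * n * y + 1) * aeval y (lehmerQ n) +
          2 * y * (1 - y) * aeval y (derivative (lehmerQ n)) := by
      simp [lehmerQ, map_ofNat (algebraMap ℝ A) 2, map_ofNat (aeval (R := ℝ) y) 2]
    have hp : aeval y (lehmerP (n + 1)) =
        2 * ((n - 1) * y + 1) * aeval y (lehmerP n) +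
          2 * y * (1 - y) * aeval y (derivative (lehmerP n)) + aeval y (lehmerQ n) := by
      simp [lehmerP, map_ofNat (algebraMap ℝ A) 2, map_ofNat (aeval (R := ℝ) y) 2]
    have h := congrArg D ih
    simp only [D.leibniz, map_add, ha, hy, D.map_aeval, smul_eq_mul] at h
    rw [hq, hp, Function.iterate_succ_apply', pow_succ]
    linear_combination 2 * (1 - y) * h - D^[n] g * hpow + 2 * n * y * ih +
      aeval y (lehmerQ n) * hg

lemma factorial_mul_coeff_eq_eval_lehmerP {g : ℝ⟦X⟧} (a c : ℝ)
    (hg0 : PowerSeries.constantCoeff g = 0)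
    (hg : 2 * (1 - PowerSeries.C c * PowerSeries.exp ℝ) * d⁄dX ℝ g =
      g + PowerSeries.C a * (PowerSeries.C c * PowerSeries.exp ℝ)) (n : ℕ) :
    (2 * (1 - c)) ^ n * (n ! * PowerSeries.coeff n g) = a * c * (lehmerP n).eval c := by
  set y : ℝ⟦X⟧ := PowerSeries.C c * PowerSeries.exp ℝ with hydef
  have hy : d⁄dX ℝ y = y := by
    simp [hydef, Derivation.leibniz, PowerSeries.derivative_exp]
  have hy0 : PowerSeries.constantCoeff y = c := by simp [hydef]
  have heval (P : ℝ[X]) : PowerSeries.constantCoeff (aeval y P) = P.eval c := by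
    have hid : PowerSeries.constantCoeff.comp (algebraMap ℝ ℝ⟦X⟧) = RingHom.id ℝ :=
      RingHom.ext fun r => by simp
    rw [aeval_def, hom_eval₂, hy0, hid, eval₂_id]
  have h := congrArg PowerSeries.constantCoeff
    (pow_mul_iterate_derivation_eq_lehmer (d⁄dX ℝ) PowerSeries.derivative_C hy hg n)
  simpa [PowerSeries.constantCoeff_iterate_derivative, hg0, hy0, heval,
    map_ofNat PowerSeries.constantCoeff 2] using h

end Lehmer

/-- If `B k n` are the poly-Bernoulli numbers `B_n^{(k)}`, characterized by the exponential
generating function `∑_{n≥0} B_n^{(k)} tⁿ/n! = ∑_{m≥1} (1-e^{-t})^{m-1}/m^k` (for `t` near `0`),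
then for every `n ≥ 0`: `(2/3)ⁿ p_n(1/4) = ∑_{k=0}^n B_{n-k}^{(-k)}`. -/
theorem lehmer_poly_value_eq_sum_polyBernoulli (B : ℤ → ℕ → ℝ)
    (hB : ∀ k : ℤ, ∃ ε > 0, ∀ t : ℝ, |t| < ε →
      HasSum (fun n : ℕ => B k n * t ^ n / (Nat.factorial n : ℝ))
        (∑' m : ℕ, (1 - Real.exp (-t)) ^ m / ((m : ℝ) + 1) ^ k))
    (n : ℕ) :
    (2 / 3 : ℝ) ^ n * (lehmerP (n + 1)).eval (1 / 4) =
      ∑ k ∈ Finset.range (n + 1), B (-(k : ℤ)) (n - k) := by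
  have hlehmer := factorial_mul_coeff_eq_eval_lehmerP 6 (1 / 4)
    (constantCoeff_antidiagonalIntegral _) (antidiagonalIntegral_polyBernoulliSeries_ode ℝ) (n + 1)
  have hinv : (2 / 3 : ℝ) ^ n * (3 / 2) ^ n = 1 := by
    rw [← mul_pow]
    norm_num
  calc (2 / 3 : ℝ) ^ n * (lehmerP (n + 1)).eval (1 / 4)
    _ = (n + 1)! * PowerSeries.coeff (n + 1) (antidiagonalIntegral (polyBernoulliSeries ℝ)) := by
        linear_combination (n + 1)! * PowerSeries.coeff (n + 1)
          (antidiagonalIntegral (polyBernoulliSeries ℝ)) * hinv - (2 / 3) ^ (n + 1) * hlehmer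
    _ = ∑ k ∈ Finset.range (n + 1), B (-(k : ℤ)) (n - k) := by
        rw [← sum_antidiagonal_factorial_mul_coeff_aeval_exp,
          Finset.Nat.sum_antidiagonal_eq_sum_range_succ_mk]
        exact Finset.sum_congr rfl fun k _ =>
          (polyBernoulli_neg_eq_factorial_mul_coeff k _ (hB _) _).symm
end

section
/- For every real number a that is not an integer and every integer n ≥ 0: Σ_{m=0}^n (-1/2)_m·(1/2-a-n)_m / ((1-a-n)_m · m!) = (1/2)_n·(a-1/2)_n / ((a)_n · n!). -/
/-- The shifted factorial (Pochhammer symbol) `(α)_n = α(α+1)⋯(α+n-1)`, `(α)_0 = 1`. -/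
def poch (α : ℝ) : ℕ → ℝ
  | 0 => 1
  | n + 1 => poch α n * (α + n)

/-!
When `γ = α + β + 1`, the partial sums of `₂F₁(α, β; γ; 1)` have a closed product form: the sum
telescopes because `(γ + n) (n + 1) + α β = (α + 1 + n) (β + 1 + n)`. In the theorem `β` and `γ`
depend on the summation bound `n`, but `γ = α + β + 1` still holds, and reversing the factors of
`(1 - x - n)_n` gives `(-1)^n (x)_n`; the two signs cancel.
-/

theorem poch_eq_ascPochhammer_eval (α : ℝ) (n : ℕ) : poch α n = (ascPochhammer ℝ n).eval α := by
  induction n with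
  | zero => simp [poch]
  | succ n ih => rw [poch, ih, ascPochhammer_succ_eval]

theorem ascPochhammer_succ_eval_left {R : Type*} [CommSemiring R] (n : ℕ) (x : R) :
    (ascPochhammer R (n + 1)).eval x = x * (ascPochhammer R n).eval (x + 1) := by
  simp [ascPochhammer_succ_left]

theorem ascPochhammer_eval_one_sub_sub {R : Type*} [CommRing R] (n : ℕ) (x : R) :
    (ascPochhammer R n).eval (1 - x - n) = (-1) ^ n * (ascPochhammer R n).eval x := by
  calc (ascPochhammer R n).eval (1 - x - n)
      = (ascPochhammer R n).eval (-(x + n - 1)) := by ring_nf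
    _ = (-1) ^ n * (descPochhammer R n).eval (x + n - 1) :=
        ascPochhammer_eval_neg_eq_descPochhammer R _ n
    _ = (-1) ^ n * (ascPochhammer R n).eval x := by
        rw [descPochhammer_eval_eq_ascPochhammer, sub_right_comm, add_sub_cancel_right,
          sub_add_cancel]

theorem ascPochhammer_eval_ne_zero_of_ne_intCast {R : Type*} [CommRing R] [IsDomain R] {a : R}
    (ha : ∀ m : ℤ, a ≠ m) (n : ℕ) : (ascPochhammer R n).eval a ≠ 0 := by
  rw [Ne, ascPochhammer_eval_eq_zero_iff]
  rintro ⟨k, -, hk⟩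
  exact ha (-k) (by simp [hk])

section Field

open scoped Nat

variable {K : Type*} [Field K] [CharZero K]

theorem sum_range_ascPochhammer_mul_div (α β : K) (n : ℕ)
    (hγ : (ascPochhammer K n).eval (α + β + 1) ≠ 0) :
    ∑ m ∈ Finset.range (n + 1), (ascPochhammer K m).eval α * (ascPochhammer K m).eval β /
        ((ascPochhammer K m).eval (α + β + 1) * (m ! : K)) =
      (ascPochhammer K n).eval (α + 1) * (ascPochhammer K n).eval (β + 1) /
        ((ascPochhammer K n).eval (α + β + 1) * (n ! : K)) := by
  induction n with
  | zero => simp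
  | succ n ih =>
    rw [ascPochhammer_succ_eval] at hγ
    obtain ⟨hγn, hγ_add⟩ := mul_ne_zero_iff.mp hγ
    have hn : (n : K) + 1 ≠ 0 := n.cast_add_one_ne_zero
    have hfac : (n ! : K) ≠ 0 := Nat.cast_ne_zero.mpr n.factorial_ne_zero
    have telescope : (α + β + 1 + n) * (n + 1) + α * β = (α + 1 + n) * (β + 1 + n) := by ring
    rw [Finset.sum_range_succ, ih hγn, ascPochhammer_succ_eval_left n α,
      ascPochhammer_succ_eval_left n β, ascPochhammer_succ_eval n (α + 1),
      ascPochhammer_succ_eval n (β + 1), ascPochhammer_succ_eval n (α + β + 1),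
      Nat.factorial_succ, Nat.cast_mul, Nat.cast_add_one]
    field_simp
    linear_combination telescope

theorem poch_sum_identity_general (a s : K) (n : ℕ) (ha : (ascPochhammer K n).eval a ≠ 0) :
    ∑ m ∈ Finset.range (n + 1),
        (ascPochhammer K m).eval (s - 1) * (ascPochhammer K m).eval (1 - s - a - n) /
          ((ascPochhammer K m).eval (1 - a - n) * (m ! : K)) =
      (ascPochhammer K n).eval s * (ascPochhammer K n).eval (a + s - 1) /
        ((ascPochhammer K n).eval a * (n ! : K)) := by
  have hsign : (-1 : K) ^ n ≠ 0 := pow_ne_zero n (neg_ne_zero.mpr one_ne_zero)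
  have hαβ : (s - 1) + (1 - s - a - n) + 1 = 1 - a - n := by ring
  have hβ : 1 - s - a - n + 1 = 1 - (a + s - 1) - n := by ring
  have hγ : (ascPochhammer K n).eval (1 - a - n) ≠ 0 := by
    rw [ascPochhammer_eval_one_sub_sub]
    exact mul_ne_zero hsign ha
  calc _ = (ascPochhammer K n).eval s * (ascPochhammer K n).eval (1 - (a + s - 1) - n) /
          ((ascPochhammer K n).eval (1 - a - n) * (n ! : K)) := by
        have hsum := sum_range_ascPochhammer_mul_div (s - 1) (1 - s - a - n) n (hαβ ▸ hγ)
        rwa [hαβ, sub_add_cancel, hβ] at hsum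
    _ = (-1) ^ n * ((ascPochhammer K n).eval s * (ascPochhammer K n).eval (a + s - 1)) /
          ((-1) ^ n * ((ascPochhammer K n).eval a * (n ! : K))) := by
        rw [ascPochhammer_eval_one_sub_sub, ascPochhammer_eval_one_sub_sub, mul_left_comm,
          mul_assoc ((-1) ^ n)]
    _ = _ := mul_div_mul_left _ _ hsign

end Field

/-- For every non-integer real `a` and every integer `n ≥ 0`:
`∑_{m=0}^n (-1/2)_m (1/2-a-n)_m / ((1-a-n)_m m!) = (1/2)_n (a-1/2)_n / ((a)_n n!)`. -/
theorem poch_sum_identity (a : ℝ) (ha : ∀ m : ℤ, a ≠ (m : ℝ)) (n : ℕ) :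
    ∑ m ∈ Finset.range (n + 1),
        poch (-(1 / 2)) m * poch (1 / 2 - a - n) m /
          (poch (1 - a - n) m * (Nat.factorial m : ℝ)) =
      poch (1 / 2) n * poch (a - 1 / 2) n / (poch a n * (Nat.factorial n : ℝ)) := by
  simpa only [poch_eq_ascPochhammer_eval, half_sub, sub_half, add_sub_assoc, ← sub_eq_add_neg] using
    poch_sum_identity_general a (1 / 2) n (ascPochhammer_eval_ne_zero_of_ne_intCast ha n)
end
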